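/- arXiv:1110.3490 — 4 statements merged into one kernel-verified Lean document; each statement's English description precedes it below -/
import Mathlib

section
/- Let n be an even positive integer and let d be an integer with 1 ≤ d < n/2. Define h(n,d) := C(n−d−1, 2) + d(d+1). Then: (i) every graph G on n vertices with minimum degree δ(G) ≥ d and more than max{h(n,d), h(n, n/2−1)} edges contains a perfect matching; and (ii) there exists a graph on n vertices with minimum degree at least d and exactly max{h(n,d), h(n, n/2−1)} edges that contains no perfect matching. Equivalently, the maximum number of edges of an n-vertex graph with minimum degree at least d having no perfect matching equals max{h(n,d), h(n, n/2−1)}. -/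
/-- The number of edges of a graph. -/
noncomputable def edgeCount {V : Type*} (G : SimpleGraph V) : ℕ := Nat.card G.edgeSet

/-- The degree of a vertex. -/
noncomputable def deg {V : Type*} (G : SimpleGraph V) (v : V) : ℕ := Nat.card (G.neighborSet v)

/-- `h(n,d) = C(n-d-1,2) + d(d+1)`. -/
def hFun (n d : ℕ) : ℕ := Nat.choose (n - d - 1) 2 + d * (d + 1)

open SimpleGraph in
lemma pm_iff {V : Type*} (G : SimpleGraph V) : (∃ M : G.Subgraph, M.IsPerfectMatching) ↔
    ∃ f : V → V, (∀ x, f (f x) = x) ∧ ∀ x, G.Adj x (f x) := by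
  constructor
  · rintro ⟨M, hM⟩
    rw [Subgraph.isPerfectMatching_iff] at hM
    choose f hf hu using hM
    refine ⟨f, fun x => ?_, fun x => (hf x).adj_sub⟩
    exact (hu (f x) x (hf x).symm).symm
  · rintro ⟨f, hf, hG⟩
    refine ⟨{ verts := Set.univ, Adj := fun a b => f a = b, adj_sub := ?_, edge_vert := ?_,
              symm := ?_ }, ?_⟩
    · rintro a b rfl; exact hG a
    · intros; trivial
    · constructor
      rintro a b rfl; exact hf a
    · rw [Subgraph.isPerfectMatching_iff]
      intro v
      exact ⟨f v, rfl, fun y (hy : f v = y) => hy ▸ rfl⟩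

/-- The degree sum of a nonadjacent pair in a maximal matching-free graph. -/
lemma deg_sum {n : ℕ} (G : SimpleGraph (Fin n)) [DecidableRel G.Adj]
    (hfree : ¬ ∃ f : Fin n → Fin n, (∀ x, f (f x) = x) ∧ ∀ x, G.Adj x (f x))
    (u v : Fin n) (huv : u ≠ v) (hnadj : ¬ G.Adj u v)
    (hmax : ∃ f : Fin n → Fin n, (∀ x, f (f x) = x) ∧ ∀ x, (G ⊔ SimpleGraph.edge u v).Adj x (f x)) :
    G.degree u + G.degree v + 2 ≤ n := by
  classical
  obtain ⟨f, hf, hG⟩ := hmax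
  have hG' : ∀ x, G.Adj x (f x) ∨ (x = u ∧ f x = v) ∨ (x = v ∧ f x = u) := by
    intro x
    have := hG x
    simp only [SimpleGraph.sup_adj, SimpleGraph.edge_adj] at this
    tauto
  have hfu : f u = v := by
    by_contra hne
    apply hfree
    refine ⟨f, hf, fun x => ?_⟩
    rcases hG' x with h | ⟨rfl, h⟩ | ⟨rfl, h⟩
    · exact h
    · exact absurd h hne
    · exact absurd (by rw [← h, hf]) hne
  have hfv : f v = u := by rw [← hfu, hf]
  have key : ∀ x, G.Adj u x → ¬ G.Adj v (f x) := by
    intro x hux hvx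
    have hxu : x ≠ u := hux.ne'
    have hxv : x ≠ v := by rintro rfl; exact hnadj hux
    have hfxv : f x ≠ v := hvx.ne'
    have hfxu : f x ≠ u := by intro h; apply hxv; rw [← hf x, h, hfu]
    have hfxx : f x ≠ x := (hG x).ne'
    apply hfree
    refine ⟨fun a => if a = u then x else if a = x then u else if a = v then f x else
      if a = f x then v else f a, fun a => ?_, fun a => ?_⟩
    · by_cases h1 : a = u
      · subst h1; simp [hxu]
      by_cases h2 : a = x
      · subst h2; simp [hxu]
      by_cases h3 : a = v
      · subst h3; simp [hfxv, hfxu, hfxx, huv.symm, hxv.symm]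
      by_cases h4 : a = f x
      · subst h4; simp [hfxv, hfxu, hfxx, huv.symm, hxv.symm]
      have e1 : f a ≠ u := by intro h; apply h3; rw [← hf a, h, hfu]
      have e2 : f a ≠ v := by intro h; apply h1; rw [← hf a, h, hfv]
      have e3 : f a ≠ x := by intro h; apply h4; rw [← hf a, h]
      have e4 : f a ≠ f x := by intro h; apply h2; rw [← hf a, h, hf]
      simp [h1, h2, h3, h4, e1, e2, e3, e4, hf]
    · by_cases h1 : a = u
      · subst h1; simpa using hux
      by_cases h2 : a = x
      · subst h2; simpa [hxu] using hux.symm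
      by_cases h3 : a = v
      · subst h3; simpa [huv.symm, hxv.symm] using hvx
      by_cases h4 : a = f x
      · subst h4; simpa [hfxv, hfxu, hfxx] using hvx.symm
      have := hG' a
      simp only [h1, h2, h3, h4, if_false, false_and, or_false] at this ⊢
      exact this
  have hinj : Function.Injective f := fun a b h => by rw [← hf a, h, hf]
  have hd1 : Disjoint ((G.neighborFinset u).image f) (G.neighborFinset v) := by
    rw [Finset.disjoint_left]
    intro a ha hb
    simp only [Finset.mem_image, SimpleGraph.mem_neighborFinset] at ha hb
    obtain ⟨x, hx, rfl⟩ := ha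
    exact key x hx hb
  have hd2 : Disjoint ((G.neighborFinset u).image f ∪ G.neighborFinset v) {u, v} := by
    rw [Finset.disjoint_left]
    intro a ha hb
    simp only [Finset.mem_union, Finset.mem_image, SimpleGraph.mem_neighborFinset,
      Finset.mem_insert, Finset.mem_singleton] at ha hb
    rcases ha with ⟨x, hx, rfl⟩ | ha
    · rcases hb with h | h
      · have : x = v := by rw [← hf x, h, hfu]
        subst this; exact hnadj hx
      · have : x = u := by rw [← hf x, h, hfv]
        subst this; exact G.loopless.irrefl _ hx
    · rcases hb with rfl | rfl
      · exact hnadj ha.symm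
      · exact G.loopless.irrefl _ ha
  have hc := Finset.card_le_univ (((G.neighborFinset u).image f ∪ G.neighborFinset v) ∪ {u, v})
  rw [Finset.card_union_of_disjoint hd2, Finset.card_union_of_disjoint hd1,
    Finset.card_image_of_injective _ hinj, Finset.card_pair huv] at hc
  simpa using hc

lemma count_le {n t : ℕ} (G : SimpleGraph (Fin n)) [DecidableRel G.Adj] (T : Finset (Fin n))
    (hT : T.card = t + 1) (hdeg : ∀ x ∈ T, G.degree x ≤ t) :
    G.edgeFinset.card ≤ hFun n t := by
  classical
  have hsub : G.edgeFinset ⊆ (Tᶜ.offDiag.image (fun p => s(p.1, p.2))) ∪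
      T.biUnion (fun x => G.incidenceFinset x) := by
    intro e
    induction e with | _ a b => ?_
    intro he
    rw [SimpleGraph.mem_edgeFinset, SimpleGraph.mem_edgeSet] at he
    simp only [Finset.mem_union, Finset.mem_biUnion, SimpleGraph.mem_incidenceFinset]
    by_cases ha : a ∈ T
    · exact Or.inr ⟨a, ha, he, by simp⟩
    by_cases hb : b ∈ T
    · exact Or.inr ⟨b, hb, he, by simp⟩
    · exact Or.inl (Finset.mem_image.2 ⟨(a, b), by simp [ha, hb, he.ne], rfl⟩)
  refine (Finset.card_le_card hsub).trans ((Finset.card_union_le _ _).trans ?_)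
  unfold hFun
  have h1 : (Tᶜ.offDiag.image (fun p => s(p.1, p.2))).card = (n - t - 1).choose 2 := by
    have := Sym2.card_image_offDiag (Tᶜ)
    rw [Finset.card_compl, hT, Fintype.card_fin] at this
    rw [Nat.sub_sub]; exact this
  have h2 : (T.biUnion (fun x => G.incidenceFinset x)).card ≤ T.card * t := by
    apply Finset.card_biUnion_le_card_mul
    intro x hx
    rw [SimpleGraph.card_incidenceFinset_eq_degree]
    exact hdeg x hx
  rw [hT] at h2
  rw [h1]
  linarith [mul_comm t (t+1)]

lemma two_hFun (m t : ℕ) (ht : t ≤ m) :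
    (2 * (hFun (2 * m + 2) t) : ℤ) = (2 * m + 1 - t) * (2 * m - t) + 2 * (t * (t + 1)) := by
  obtain ⟨k, rfl⟩ := Nat.exists_eq_add_of_le ht
  unfold hFun
  have e : 2 * (t + k) + 2 - t - 1 = (t + 2 * k) + 1 := by omega
  rw [e]
  have h := Nat.triangle_succ (t + 2 * k)
  have h2 : (t + 2 * k + 1).choose 2 * 2 = (t + 2 * k + 1) * (t + 2 * k) := by
    rw [Nat.choose_two_right]
    exact Nat.div_mul_cancel (by simpa using (Nat.even_mul_pred_self (t + 2 * k + 1)).two_dvd)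
  have h3 : ((t + 2 * k + 1).choose 2 * 2 : ℤ) = (t + 2 * k + 1) * (t + 2 * k) := by
    exact_mod_cast h2
  push_cast
  linarith

lemma hFun_convex (m d t : ℕ) (hd : d ≤ t) (ht : t ≤ m) :
    hFun (2 * m + 2) t ≤ max (hFun (2 * m + 2) d) (hFun (2 * m + 2) m) := by
  have a := two_hFun m d (hd.trans ht)
  have b := two_hFun m t ht
  have c := two_hFun m m le_rfl
  rw [le_max_iff]
  zify at hd ht ⊢
  rcases le_or_gt (3 * ((t : ℤ) + d) - 4 * m + 1) 0 with h | h
  · left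
    nlinarith [mul_nonneg (sub_nonneg.2 hd) (sub_nonneg.2 h)]
  · right
    have h' : 0 ≤ 3 * ((m : ℤ) + t) - 4 * m + 1 := by linarith
    nlinarith [mul_nonneg (sub_nonneg.2 ht) h']

lemma edgeCount_eq {n : ℕ} (G : SimpleGraph (Fin n)) [DecidableRel G.Adj] :
    edgeCount G = G.edgeFinset.card := by
  rw [edgeCount, Nat.card_eq_fintype_card, SimpleGraph.edgeFinset_card]

lemma deg_eq {n : ℕ} (G : SimpleGraph (Fin n)) [DecidableRel G.Adj] (v : Fin n) :
    deg G v = G.degree v := by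
  rw [deg, Nat.card_eq_fintype_card, SimpleGraph.card_neighborSet_eq_degree]

lemma upper (m d : ℕ) (G : SimpleGraph (Fin (2 * m + 2))) (hdeg : ∀ v, d ≤ deg G v)
    (hno : ¬ ∃ M : G.Subgraph, M.IsPerfectMatching) :
    edgeCount G ≤ max (hFun (2 * m + 2) d) (hFun (2 * m + 2) m) := by
  classical
  obtain ⟨H, hGH, hfree, hmax⟩ := SimpleGraph.exists_maximal_isMatchingFree
    (G := G) (fun M hM => hno ⟨M, hM⟩)
  have hfree' : ¬ ∃ f : Fin (2 * m + 2) → Fin (2 * m + 2),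
      (∀ x, f (f x) = x) ∧ ∀ x, H.Adj x (f x) := by
    rw [← pm_iff]; rintro ⟨M, hM⟩; exact hfree M hM
  have hsum : ∀ u v, u ≠ v → ¬ H.Adj u v → H.degree u + H.degree v + 2 ≤ 2 * m + 2 := by
    intro u v huv hn
    apply deg_sum H hfree' u v huv hn
    rw [← pm_iff]
    apply hmax
    rw [gt_iff_lt, left_lt_sup, SimpleGraph.edge_le_iff]
    tauto
  have hle : edgeCount G ≤ H.edgeFinset.card := by
    rw [edgeCount_eq]; exact Finset.card_le_card (SimpleGraph.edgeFinset_mono hGH)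
  have hdH : ∀ v, d ≤ H.degree v := fun v => by
    have := hdeg v
    rw [deg_eq] at this
    exact this.trans (SimpleGraph.degree_le_of_le hGH)
  let P : Finset (Fin (2 * m + 2) × Fin (2 * m + 2)) :=
    Finset.univ.filter (fun p => p.1 ≠ p.2 ∧ ¬ H.Adj p.1 p.2)
  have hP : P.Nonempty := by
    by_contra hP
    rw [Finset.not_nonempty_iff_eq_empty] at hP
    have hall : ∀ a b, a ≠ b → H.Adj a b := by
      intro a b hab
      by_contra hn
      have : (a, b) ∈ P := by simp [P, hab, hn]
      simp [hP] at this
    apply hfree'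
    refine ⟨Fin.rev, Fin.rev_rev, fun x => hall _ _ ?_⟩
    intro h
    have := congrArg Fin.val h
    rw [Fin.val_rev] at this
    omega
  obtain ⟨p, hpP, hpmax⟩ := P.exists_max_image (fun p => H.degree p.1 + H.degree p.2) hP
  have main : ∀ u v, u ≠ v → ¬ H.Adj u v → H.degree u ≤ H.degree v →
      (∀ a b, a ≠ b → ¬ H.Adj a b → H.degree a + H.degree b ≤ H.degree u + H.degree v) →
      edgeCount G ≤ max (hFun (2 * m + 2) d) (hFun (2 * m + 2) m) := by
    intro u v huv hn hle' hm
    have hs := hsum u v huv hn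
    have hcard : H.degree u + 1 ≤ (Finset.univ \ insert v (H.neighborFinset v)).card := by
      rw [Finset.card_sdiff_of_subset (Finset.subset_univ _), Finset.card_insert_of_notMem (by simp)]
      simp only [Finset.card_univ, Fintype.card_fin, SimpleGraph.card_neighborFinset_eq_degree]
      omega
    obtain ⟨T, hTs, hT⟩ := Finset.exists_subset_card_eq hcard
    have := count_le H T hT (fun x hx => by
      have hx' := hTs hx
      simp only [Finset.mem_sdiff, Finset.mem_univ, true_and, Finset.mem_insert,
        SimpleGraph.mem_neighborFinset, not_or] at hx'
      have := hm x v hx'.1 (fun h => hx'.2 h.symm)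
      omega)
    exact hle.trans (this.trans (hFun_convex m d _ (hdH u) (by omega)))
  have hp' : p.1 ≠ p.2 ∧ ¬ H.Adj p.1 p.2 := by simpa [P] using hpP
  have hm' : ∀ a b, a ≠ b → ¬ H.Adj a b → H.degree a + H.degree b ≤ H.degree p.1 + H.degree p.2 :=
    fun a b h1 h2 => hpmax (a, b) (by simp [P, h1, h2])
  rcases le_total (H.degree p.1) (H.degree p.2) with h | h
  · exact main p.1 p.2 hp'.1 hp'.2 h hm'
  · exact main p.2 p.1 hp'.1.symm (fun h => hp'.2 h.symm) h
      (fun a b h1 h2 => (hm' a b h1 h2).trans (by omega))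

lemma lower (m t : ℕ) (ht : t ≤ m) : ∃ G : SimpleGraph (Fin (2 * m + 2)), (∀ v, t ≤ deg G v) ∧
      edgeCount G = hFun (2 * m + 2) t ∧
      ¬ ∃ M : G.Subgraph, M.IsPerfectMatching := by
  classical
  let G : SimpleGraph (Fin (2 * m + 2)) :=
    { Adj := fun a b => a ≠ b ∧ ((a.val < 2 * m + 1 - t ∧ b.val < 2 * m + 1 - t) ∨
        a.val < t ∨ b.val < t)
      symm := ⟨fun a b h => by tauto⟩
      loopless := ⟨fun a h => h.1 rfl⟩ }
  have hG : ∀ a b, G.Adj a b ↔ a ≠ b ∧ ((a.val < 2 * m + 1 - t ∧ b.val < 2 * m + 1 - t) ∨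
        a.val < t ∨ b.val < t) := fun a b => Iff.rfl
  let S : Finset (Fin (2 * m + 2)) := Finset.univ.filter (fun a => a.val < t)
  let U : Finset (Fin (2 * m + 2)) := Finset.univ.filter (fun a => a.val < 2 * m + 1 - t)
  have hS : S.card = t := by
    simp only [S, Fin.card_filter_val_lt]; omega
  have hU : U.card = 2 * m + 1 - t := by
    simp only [U, Fin.card_filter_val_lt]; omega
  have hUc : Uᶜ.card = t + 1 := by
    rw [Finset.card_compl, hU, Fintype.card_fin]; omega
  have hSU : ∀ a, a ∈ S → a ∈ U := by
    intro a; simp only [S, U, Finset.mem_filter, Finset.mem_univ, true_and]; omega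
  have mS : ∀ a, a ∈ S ↔ a.val < t := by simp [S]
  have mU : ∀ a, a ∈ U ↔ a.val < 2 * m + 1 - t := by simp [U]
  simp only [← mS, ← mU] at hG
  refine ⟨G, fun v => ?_, ?_, ?_⟩
  · rw [deg_eq, ← SimpleGraph.card_neighborFinset_eq_degree]
    by_cases hv : v ∈ S
    · have : Finset.univ.erase v ⊆ G.neighborFinset v := by
        intro a ha
        rw [SimpleGraph.mem_neighborFinset, hG]
        have := (Finset.mem_erase.1 ha).1
        tauto
      have := Finset.card_le_card this
      rw [Finset.card_erase_of_mem (Finset.mem_univ _), Finset.card_univ, Fintype.card_fin] at this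
      omega
    · have : S ⊆ G.neighborFinset v := by
        intro a ha
        rw [SimpleGraph.mem_neighborFinset, hG]
        refine ⟨?_, Or.inr (Or.inr ha)⟩
        rintro rfl; exact hv ha
      have := Finset.card_le_card this
      omega
  · rw [edgeCount_eq]
    have he : G.edgeFinset = (U.offDiag.image (fun p => s(p.1, p.2))) ∪
        ((S ×ˢ Uᶜ).image (fun p => s(p.1, p.2))) := by
      ext e
      induction e with | _ a b => ?_
      rw [SimpleGraph.mem_edgeFinset, SimpleGraph.mem_edgeSet, hG]
      simp only [Finset.mem_union, Finset.mem_image, Finset.mem_offDiag, Finset.mem_product,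
        Finset.mem_compl, Prod.exists, Sym2.eq_iff]
      constructor
      · rintro ⟨hab, h⟩
        by_cases ha : a ∈ U
        · by_cases hb : b ∈ U
          · exact Or.inl ⟨a, b, ⟨ha, hb, hab⟩, by simp⟩
          · have : a ∈ S := by have := hSU b; tauto
            exact Or.inr ⟨a, b, ⟨this, hb⟩, by simp⟩
        · have : b ∈ S := by have := hSU a; tauto
          exact Or.inr ⟨b, a, ⟨this, ha⟩, by simp⟩
      · rintro (⟨x, y, ⟨h1, h2, h3⟩, ⟨rfl, rfl⟩ | ⟨rfl, rfl⟩⟩ |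
          ⟨x, y, ⟨h1, h2⟩, ⟨rfl, rfl⟩ | ⟨rfl, rfl⟩⟩)
        · tauto
        · exact ⟨h3.symm, by tauto⟩
        · exact ⟨by rintro rfl; exact h2 (hSU _ h1), by tauto⟩
        · exact ⟨by rintro rfl; exact h2 (hSU _ h1), by tauto⟩
    rw [he, Finset.card_union_of_disjoint, Finset.card_image_of_injOn (s := S ×ˢ Uᶜ),
      Finset.card_product, hS, hUc]
    · have := Sym2.card_image_offDiag U
      rw [hU] at this
      unfold hFun
      rw [show 2 * m + 2 - t - 1 = 2 * m + 1 - t by omega, ← this]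
      rfl
    · rintro ⟨a, b⟩ h ⟨c, e⟩ h' heq
      simp only [Finset.coe_product, Set.mem_prod, Finset.mem_coe, Finset.mem_compl] at h h'
      simp only [Sym2.eq_iff] at heq
      rcases heq with ⟨rfl, rfl⟩ | ⟨rfl, rfl⟩
      · rfl
      · exact absurd (hSU _ h.1) h'.2
    · rw [Finset.disjoint_left]
      intro e h1 h2
      simp only [Finset.mem_image, Finset.mem_offDiag, Finset.mem_product,
        Finset.mem_compl, Prod.exists] at h1 h2
      obtain ⟨a, b, h, rfl⟩ := h1
      obtain ⟨c, e, h', heq⟩ := h2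
      rw [Sym2.eq_iff] at heq
      rcases heq with ⟨rfl, rfl⟩ | ⟨rfl, rfl⟩
      · exact h'.2 h.2.1
      · exact h'.2 h.1
  · rw [pm_iff]
    rintro ⟨f, hf, hA⟩
    have hinj : Function.Injective f := fun a b h => by rw [← hf a, h, hf]
    have : Uᶜ.card ≤ S.card := by
      apply Finset.card_le_card_of_injOn f _ hinj.injOn
      intro a ha
      have ha' : a ∉ U := by simpa using ha
      have h1 := (hG _ _).1 (hA a)
      have := hSU a
      show f a ∈ S
      tauto
    omega

/-- For an even positive `n` and `1 ≤ d < n/2`, the maximum number of edges of an `n`-vertex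
graph with minimum degree at least `d` having no perfect matching equals
`max {h(n,d), h(n, n/2 - 1)}`: every graph with more edges (and min degree ≥ d) has a perfect
matching, and there is a graph attaining this number of edges with no perfect matching. -/
theorem stmt0 (n d : ℕ) (hn : 0 < n) (hneven : Even n) (hd1 : 1 ≤ d) (hd2 : 2 * d < n) :
    (∀ G : SimpleGraph (Fin n), (∀ v, d ≤ deg G v) →
      max (hFun n d) (hFun n (n / 2 - 1)) < edgeCount G →
      ∃ M : G.Subgraph, M.IsPerfectMatching) ∧
    (∃ G : SimpleGraph (Fin n), (∀ v, d ≤ deg G v) ∧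
      edgeCount G = max (hFun n d) (hFun n (n / 2 - 1)) ∧
      ¬ ∃ M : G.Subgraph, M.IsPerfectMatching) := by
  obtain ⟨k, hk⟩ := hneven
  obtain ⟨m, rfl⟩ : ∃ m, k = m + 1 := ⟨k - 1, by omega⟩
  obtain rfl : n = 2 * m + 2 := by omega
  have e : (2 * m + 2) / 2 - 1 = m := by omega
  rw [e]
  refine ⟨fun G hdeg hlt => ?_, ?_⟩
  · by_contra hno
    exact absurd (upper m d G hdeg hno) (not_le.2 hlt)
  · rcases le_total (hFun (2 * m + 2) d) (hFun (2 * m + 2) m) with h | h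
    · obtain ⟨G, h1, h2, h3⟩ := lower m m le_rfl
      exact ⟨G, fun v => le_trans (by omega) (h1 v), by rw [max_eq_right h]; exact h2, h3⟩
    · obtain ⟨G, h1, h2, h3⟩ := lower m d (by omega)
      exact ⟨G, h1, by rw [max_eq_left h]; exact h2, h3⟩
end

section
/- Let n, r ∈ ℕ with r ≥ 3 and r dividing n, and let D ∈ ℕ with n/r ≤ D ≤ n − r. Define f(n,r,D) := min{ C(n/r+1, 2), D + e(\overline{T}(n−D−1, r−2)) }. Then every graph G on n vertices with maximum degree Δ(G) ≤ D and e(G) < f(n,r,D) has an equitable (n/r)-colouring. Moreover, there exists a graph G' on n vertices with Δ(G') ≤ D and e(G') = f(n,r,D) that has no equitable (n/r)-colouring. -/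
/-- An equitable `k`-colouring: a proper colouring with `k` colours whose colour classes
differ in size by at most one. -/
def HasEquitableColoring {n : ℕ} (G : SimpleGraph (Fin n)) (k : ℕ) : Prop :=
  ∃ c : Fin n → Fin k,
    (∀ u v, G.Adj u v → c u ≠ c v) ∧
    ∀ i j : Fin k, (Finset.univ.filter fun v => c v = i).card ≤
      (Finset.univ.filter fun v => c v = j).card + 1

/-- `f(n,r,D)`, where `e(T̄(n-D-1, r-2))` is the number of edges of the complement of the
Turán graph. -/
noncomputable def fFun (n r D : ℕ) : ℕ :=
  min (Nat.choose (n / r + 1) 2)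
    (D + edgeCount ((SimpleGraph.turanGraph (n - D - 1) (r - 2))ᶜ))

/-- Number of edges of the complement of the Turán graph on `m` vertices with `s` parts. -/
def tt (s m : ℕ) : ℕ := ∑ i ∈ Finset.range m, i / s

lemma tt_succ (s m : ℕ) : tt s (m + 1) = tt s m + m / s := by
  simp [tt, Finset.sum_range_succ]

lemma tt_mono (s : ℕ) {a b : ℕ} (h : a ≤ b) : tt s a ≤ tt s b := by
  unfold tt
  exact Finset.sum_le_sum_of_subset (Finset.range_mono h)

lemma tt_add (s p : ℕ) (hs : 1 ≤ s) : tt s (p + s) = tt s p + p := by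
  induction p with
  | zero =>
    simp only [tt, zero_add, Finset.range_zero, Finset.sum_empty]
    apply Finset.sum_eq_zero
    intro i hi
    exact Nat.div_eq_of_lt (Finset.mem_range.1 hi)
  | succ p ih =>
    rw [show p + 1 + s = (p + s) + 1 by ring, tt_succ, tt_succ, ih, Nat.add_div_right _ (by omega)]
    omega

lemma tt_ge_lin (s p : ℕ) (hs : 1 ≤ s) : p ≤ tt s p + s := by
  by_cases h : p ≤ s
  · omega
  · obtain ⟨q, rfl⟩ := Nat.exists_eq_add_of_le (le_of_not_ge h)
    rw [add_comm s q, tt_add s q hs]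
    omega

lemma tt_sq (s p : ℕ) (hs : 1 ≤ s) : p * p ≤ 2 * s * tt s p + s * p := by
  induction p using Nat.strong_induction_on with
  | _ p ih =>
    by_cases h : p < s
    · nlinarith
    · obtain ⟨q, rfl⟩ := Nat.exists_eq_add_of_le (le_of_not_gt h)
      have := ih q (by omega)
      rw [add_comm s q, tt_add s q hs]
      nlinarith

lemma num1 (s k p d : ℕ) (hs : 1 ≤ s) (hk : 2 ≤ k) (h1 : p + d + 1 = (s + 2) * (k - 1))
    (h2 : s * d ≤ (s + 1) * p) : k * (k - 1) ≤ 2 * d + 2 * tt s p := by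
  obtain ⟨j, rfl⟩ : ∃ j, k = j + 1 := ⟨k - 1, by omega⟩
  simp only [Nat.add_sub_cancel] at *
  by_cases hj : j ≤ 2 * s + 1
  · have := tt_ge_lin s p hs
    nlinarith
  · push Not at hj
    have h3 := tt_sq s p hs
    have h4 : s * (p + d) ≤ (2 * s + 1) * p := by nlinarith
    zify at *
    generalize (tt s p : ℤ) = t at *
    have hp0 : (0 : ℤ) ≤ p := by positivity
    generalize (p : ℤ) = p at *
    generalize (d : ℤ) = d at *
    generalize (s : ℤ) = s at *
    generalize (j : ℤ) = j at *
    have hd : d = (s + 2) * j - 1 - p := by linarith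
    subst hd
    -- (2s+1) p ≥ s ((s+2) j - 1)
    have h5 : (s : ℤ) * ((s + 2) * j - 1) ≤ (2 * s + 1) * p := by nlinarith
    suffices hh : ((j : ℤ) + 1) * j * s * (2 * s + 1)^2 ≤
      (2 * ((s + 2) * j - 1 - p) * s + (p * p - s * p)) * (2 * s + 1) ^ 2 by
      have h6 : ((j : ℤ) + 1) * j * s ≤ (2 * ((s + 2) * j - 1 - p) * s + (p * p - s * p)) :=
        le_of_mul_le_mul_right hh (by positivity)
      have h7 : ((j : ℤ) + 1) * j * s ≤ (2 * ((s + 2) * j - 1 - p) + 2 * t) * s := by nlinarith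
      exact le_of_mul_le_mul_right h7 (by linarith)
    obtain ⟨y, hy⟩ : ∃ y : ℤ, (2 * (s:ℤ) + 1) * p = s * ((s + 2) * j - 1) + y :=
      ⟨(2 * s + 1) * p - s * ((s + 2) * j - 1), by ring⟩
    have hy0 : 0 ≤ y := by linarith
    have e1 : (2 * ((s + 2) * j - 1 - p) * s + ((p:ℤ) * p - s * p)) * (2 * s + 1) ^ 2
      = 2 * s * (2 * s + 1)^2 * ((s+2) * j - 1) + ((2 * (s:ℤ) + 1) * p) * ((2 * (s:ℤ) + 1) * p)
        - 3 * s * (2 * s + 1) * ((2 * (s:ℤ) + 1) * p) := by ring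
    rw [e1, hy]
    obtain ⟨i, rfl⟩ : ∃ i : ℤ, (j : ℤ) = 2 * s + 2 + i := ⟨j - 2 * s - 2, by ring⟩
    obtain ⟨u, hu⟩ : ∃ u : ℤ, (s : ℤ) = 1 + u := ⟨s - 1, by ring⟩
    have hi : 0 ≤ i := by linarith
    have hu0 : 0 ≤ u := by linarith
    rw [hu]
    rw [← sub_nonneg]
    ring_nf
    positivity

lemma num2a (s p d m : ℕ) (hs : 1 ≤ s) (h2 : (s + 1) * p < s * d) (hm : m ≤ p + s + 1) :
    tt s m ≤ d + tt s p := by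
  have h := tt_mono s hm
  rw [tt_succ, tt_add s p hs, Nat.add_div_right _ (by omega)] at h
  have h3 : p / s + p < d := by
    by_contra hc
    have h4 := Nat.div_mul_le_self p s
    push Not at hc
    nlinarith
  omega

lemma num2b (s p d m : ℕ) (hs : 1 ≤ s) (h2 : (s + 1) * p < s * d) (hm : m ≤ p + s + 2) :
    tt s m ≤ (s + 1) * d + d + tt s p := by
  have h := tt_mono s hm
  rw [tt_succ (m := p + s + 1)] at h
  have h1 := num2a s p d (p + s + 1) hs h2 le_rfl
  rw [show p + s + 1 = (p + 1) + s by ring, Nat.add_div_right _ (by omega)] at h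
  rw [show p + s + 1 = (p + 1) + s by ring] at h1
  have h3 : (p + 1) / s ≤ p + 1 := Nat.div_le_self _ _
  have h4 : p < d := by nlinarith
  nlinarith

open Classical in
/-- Degree of `v` into the set `A`. -/
noncomputable def dg {V : Type*} (G : SimpleGraph V) (A : Finset V) (v : V) : ℕ :=
  (A.filter (fun u => G.Adj v u)).card

/-- Twice the number of edges inside `A`. -/
noncomputable def EE {V : Type*} (G : SimpleGraph V) (A : Finset V) : ℕ :=
  ∑ v ∈ A, dg G A v

/-- Independent sets. -/
def Ind {V : Type*} (G : SimpleGraph V) (S : Finset V) : Prop :=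
  ∀ u ∈ S, ∀ v ∈ S, ¬ G.Adj u v

set_option linter.unusedSectionVars false

section
variable {V : Type*} [DecidableEq V] (G : SimpleGraph V)

lemma dg_mono {A B : Finset V} (h : A ⊆ B) (v : V) : dg G A v ≤ dg G B v := by
  classical
  exact Finset.card_le_card (Finset.filter_subset_filter _ h)

lemma EE_mono {A B : Finset V} (h : A ⊆ B) : EE G A ≤ EE G B := by
  unfold EE
  calc ∑ v ∈ A, dg G A v ≤ ∑ v ∈ A, dg G B v := Finset.sum_le_sum fun v _ => dg_mono G h v
    _ ≤ _ := Finset.sum_le_sum_of_subset h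

lemma dg_split {A S : Finset V} (h : S ⊆ A) (v : V) :
    dg G A v = dg G (A \ S) v + dg G S v := by
  classical
  unfold dg
  rw [← Finset.card_union_of_disjoint]
  · rw [← Finset.filter_union, Finset.sdiff_union_of_subset h]
  · exact Finset.disjoint_filter_filter Finset.sdiff_disjoint

lemma dg_comm (A B : Finset V) : ∑ v ∈ A, dg G B v = ∑ v ∈ B, dg G A v := by
  classical
  unfold dg
  simp only [Finset.card_filter]
  rw [Finset.sum_comm]
  simp only [G.adj_comm]

lemma dg_ind {S : Finset V} (h : Ind G S) {v : V} (hv : v ∈ S) : dg G S v = 0 := by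
  classical
  unfold dg
  rw [Finset.card_eq_zero, Finset.filter_eq_empty_iff]
  exact fun u hu => h v hv u hu

/-- Removing an independent set. -/
lemma EE_sdiff {A S : Finset V} (h : S ⊆ A) (hS : Ind G S) :
    EE G A = EE G (A \ S) + 2 * ∑ v ∈ S, dg G A v := by
  unfold EE
  rw [← Finset.sum_sdiff h]
  have h1 : ∑ v ∈ A \ S, dg G A v = ∑ v ∈ A \ S, dg G (A \ S) v + ∑ v ∈ A \ S, dg G S v := by
    rw [← Finset.sum_add_distrib]
    exact Finset.sum_congr rfl fun v _ => dg_split G h v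
  have h2 : ∑ v ∈ S, dg G A v = ∑ v ∈ S, dg G (A \ S) v := by
    apply Finset.sum_congr rfl
    intro v hv
    rw [dg_split G h v, dg_ind G hS hv, add_zero]
  rw [h1, dg_comm G (A \ S) S, ← h2]
  ring

lemma dg_lt {A : Finset V} {v : V} (hv : v ∈ A) : dg G A v < A.card := by
  classical
  unfold dg
  apply Finset.card_lt_card
  rw [Finset.filter_ssubset]
  exact ⟨v, hv, G.loopless.irrefl v⟩

/-- the non-neighbours of `v`. -/
lemma nonnbr {A : Finset V} {v : V} (hv : v ∈ A) : ∃ B ⊆ A, v ∉ B ∧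
    (∀ u, u ∈ B ↔ u ∈ A ∧ u ≠ v ∧ ¬ G.Adj v u) ∧ B.card + dg G A v + 1 = A.card := by
  classical
  refine ⟨(A.filter (fun u => ¬ G.Adj v u)).erase v, ?_, by simp, ?_, ?_⟩
  · exact (Finset.erase_subset _ _).trans (Finset.filter_subset _ _)
  · intro u; simp; tauto
  · rw [Finset.card_erase_of_mem (by simp [hv])]
    have := Finset.card_filter_add_card_filter_not (s := A) (fun u => G.Adj v u)
    have h2 : 0 < (A.filter (fun u => ¬ G.Adj v u)).card := Finset.card_pos.2 ⟨v, by simp [hv]⟩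
    unfold dg
    omega

lemma ind_insert {S : Finset V} {v : V} (hS : Ind G S) (h : ∀ u ∈ S, ¬ G.Adj v u) :
    Ind G (insert v S) := by
  intro a ha b hb
  rw [Finset.mem_insert] at ha hb
  rcases ha with rfl | ha <;> rcases hb with rfl | hb
  · exact G.loopless.irrefl _
  · exact h _ hb
  · exact fun hh => h _ ha hh.symm
  · exact hS _ ha _ hb

lemma greedy (f : ℕ) : ∀ (j : ℕ) (B : Finset V), (∀ v ∈ B, dg G B v < f) → j * f + 1 ≤ B.card →
    ∃ S ⊆ B, S.card = j + 1 ∧ Ind G S := by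
  intro j
  induction j with
  | zero =>
    intro B _ hc
    obtain ⟨v, hv⟩ := Finset.card_pos.1 (show 0 < B.card by omega)
    refine ⟨{v}, by simpa using hv, by simp, ?_⟩
    intro a ha b hb
    simp at ha hb
    subst ha; subst hb
    exact G.loopless.irrefl _
  | succ j ih =>
    intro B hd hc
    obtain ⟨v, hv⟩ := Finset.card_pos.1 (show 0 < B.card by omega)
    obtain ⟨C, hCB, hvC, hC, hcard⟩ := nonnbr G hv
    have h1 := hd v hv
    obtain ⟨S, hS, hSc, hSi⟩ := ih C (fun u hu => (dg_mono G hCB u).trans_lt (hd u (hCB hu)))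
      (by rw [add_mul] at hc; omega)
    refine ⟨insert v S, ?_, ?_, ?_⟩
    · exact Finset.insert_subset hv (hS.trans hCB)
    · rw [Finset.card_insert_of_notMem (fun h => hvC (hS h)), hSc]
    · exact ind_insert G hSi fun u hu => ((hC u).1 (hS hu)).2.2

lemma ind_single (v : V) : Ind G {v} := by
  intro a ha b hb
  simp at ha hb
  subst ha; subst hb
  exact G.loopless.irrefl _

/-- Turán's theorem, in complementary form. -/
lemma turan' (s : ℕ) : ∀ (m : ℕ) (B : Finset V), B.card = m → EE G B < 2 * tt s m →
    ∃ S ⊆ B, S.card = s + 1 ∧ Ind G S := by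
  intro m
  induction m with
  | zero => intro B _ h; simp [tt] at h
  | succ m ih =>
    intro B hB h
    by_cases hex : ∃ v ∈ B, m / s ≤ dg G B v
    · obtain ⟨v, hv, hd⟩ := hex
      have h1 := EE_sdiff G (Finset.singleton_subset_iff.2 hv) (ind_single G v)
      rw [Finset.sum_singleton] at h1
      rw [tt_succ] at h
      obtain ⟨S, hS, hSc⟩ := ih (B \ {v})
        (by rw [Finset.card_sdiff_of_subset (by simpa using hv)]; simp [hB]) (by omega)
      exact ⟨S, hS.trans Finset.sdiff_subset, hSc⟩
    · push Not at hex
      exact greedy G (m / s) s B hex (by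
        have := Nat.div_mul_le_self m s
        rw [hB, mul_comm]; omega)

lemma ev_bound (s k d x z p E : ℕ) (hxz : (s + 1) * z ≤ x) (hzd : z ≤ d) (hp : p ≤ d + x)
    (hk : d + x + 1 ≤ k) (hq : p + (s + 2) ≤ (s + 2) * k)
    (hE : E ≤ (d + x) + (p * d + ((s + 2) * k - (s + 2) - p) * z)) :
    E ≤ (d + x) * k := by
  obtain ⟨k', rfl⟩ : ∃ k', k = d + x + 1 + k' := ⟨k - (d + x + 1), by omega⟩
  obtain ⟨y, rfl⟩ : ∃ y, x = (s + 1) * z + y := ⟨x - (s + 1) * z, by omega⟩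
  obtain ⟨w, rfl⟩ : ∃ w, d = z + w := ⟨d - z, by omega⟩
  obtain ⟨a, ha⟩ := Nat.exists_eq_add_of_le hp
  have h : (s + 2) * z + (w + y) = p + a := by linarith
  rw [ha] at hE ⊢
  refine hE.trans ?_
  have e : (s + 2) * (p + a + 1 + k') - (s + 2) - p = (s + 1) * p + (s + 2) * (a + k') := by
    have : (s + 2) * (p + a + 1 + k') = (s + 1) * p + (s + 2) * (a + k') + p + (s + 2) := by ring
    omega
  rw [e]
  have h2 : (p + a) * (p + a + 1 + k') = (p + a) + (p + a) * p + (p + a) * (a + k') := by ring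
  rw [h2, ← h]
  nlinarith [Nat.zero_le (y * p), Nat.zero_le ((w + y) * (a + k'))]

/-- The selected independent set. -/
lemma select (s k : ℕ) (hs : 1 ≤ s) (A : Finset V) (hA : A.card = (s + 2) * k)
    (v : V) (hv : v ∈ A)
    (h : EE G A < 2 * dg G A v + 2 * tt s ((s + 2) * k - 1 - dg G A v)) :
    ∃ S₀ ⊆ A, v ∉ S₀ ∧ S₀.card = s + 1 ∧ Ind G (insert v S₀) ∧
      ∃ z, (s + 1) * z ≤ ∑ u ∈ S₀, dg G A u ∧ (∃ u ∈ A, z = dg G A u) ∧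
        ∀ u ∈ A, (u ∉ insert v S₀) → (∀ a ∈ insert v S₀, ¬ G.Adj a u) → dg G A u ≤ z := by
  classical
  obtain ⟨B, hBA, hvB, hB, hcard⟩ := nonnbr G hv
  have h1 := EE_sdiff G (Finset.singleton_subset_iff.2 hv) (ind_single G v)
  rw [Finset.sum_singleton] at h1
  have h2 : B ⊆ A \ {v} := by
    intro u hu
    rw [Finset.mem_sdiff, Finset.mem_singleton]
    exact ⟨hBA hu, fun h => hvB (h ▸ hu)⟩
  have h3 := EE_mono G h2
  obtain ⟨S₁, hS₁, hS₁c, hS₁i⟩ := turan' G s _ B rfl (by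
    rw [show B.card = (s + 2) * k - 1 - dg G A v by omega]; omega)
  obtain ⟨S, hSm, hmax⟩ := Finset.exists_max_image
    ((B.powerset).filter (fun S => S.card = s + 1 ∧ Ind G S)) (fun S => ∑ u ∈ S, dg G A u)
    ⟨S₁, by simp [hS₁, hS₁c, hS₁i]⟩
  simp only [Finset.mem_filter, Finset.mem_powerset] at hSm hmax
  obtain ⟨hSB, hSc, hSi⟩ := hSm
  have hSne : S.Nonempty := Finset.card_pos.1 (by omega)
  obtain ⟨z, hz, hzmin⟩ := Finset.exists_min_image S (dg G A) hSne
  refine ⟨S, hSB.trans hBA, fun h => hvB (hSB h), hSc, ?_, dg G A z, ?_, ⟨z, hBA (hSB hz), rfl⟩, ?_⟩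
  · exact ind_insert G hSi fun u hu => ((hB u).1 (hSB hu)).2.2
  · rw [← hSc, ← smul_eq_mul]
    exact Finset.card_nsmul_le_sum _ _ _ hzmin
  · intro u huA huS hadj
    rw [Finset.mem_insert, not_or] at huS
    have huB : u ∈ B := (hB u).2 ⟨huA, huS.1, hadj v (Finset.mem_insert_self _ _)⟩
    have hue : u ∉ S.erase z := fun h => huS.2 (Finset.mem_of_mem_erase h)
    have := hmax (insert u (S.erase z)) ⟨?_, ?_, ?_⟩
    · rw [Finset.sum_insert hue] at this
      have h4 := Finset.add_sum_erase S (dg G A) hz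
      omega
    · exact Finset.insert_subset huB ((Finset.erase_subset _ _).trans hSB)
    · rw [Finset.card_insert_of_notMem hue, Finset.card_erase_of_mem hz]; omega
    · refine ind_insert G (fun a ha b hb => hSi a (Finset.mem_of_mem_erase ha) b
        (Finset.mem_of_mem_erase hb)) ?_
      intro a ha hh
      exact hadj a (Finset.mem_insert_of_mem (Finset.mem_of_mem_erase ha)) hh.symm

lemma edge_drop (s k : ℕ) (hk : 2 ≤ k) (A : Finset V) (hA : A.card = (s + 2) * k)
    (hE : EE G A < k * (k + 1))
    (v : V) (hv : v ∈ A) (hmax : ∀ u ∈ A, dg G A u ≤ dg G A v)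
    (S₀ : Finset V) (hS₀ : S₀ ⊆ A) (hvS : v ∉ S₀) (hc : S₀.card = s + 1)
    (hi : Ind G (insert v S₀)) (z : ℕ) (hz : (s + 1) * z ≤ ∑ u ∈ S₀, dg G A u)
    (hzA : ∃ u ∈ A, z = dg G A u)
    (hz2 : ∀ u ∈ A, (u ∉ insert v S₀) → (∀ a ∈ insert v S₀, ¬ G.Adj a u) → dg G A u ≤ z) :
    EE G (A \ insert v S₀) < k * (k - 1) := by
  classical
  have hSA : insert v S₀ ⊆ A := Finset.insert_subset hv hS₀
  have h1 := EE_sdiff G hSA hi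
  rw [Finset.sum_insert hvS] at h1
  set d := dg G A v with hd
  set x := ∑ u ∈ S₀, dg G A u with hx
  obtain ⟨j, rfl⟩ : ∃ j, k = j + 1 := ⟨k - 1, by omega⟩
  simp only [Nat.add_sub_cancel]
  by_cases hck : j + 1 ≤ d + x
  · nlinarith
  push Not at hck
  set S := insert v S₀ with hS
  have hScard : S.card = s + 2 := by rw [hS, Finset.card_insert_of_notMem hvS, hc]
  set N := (A \ S).filter (fun u => ∃ a ∈ S, G.Adj a u) with hN
  have hNc : N.card ≤ d + x := by
    have : N ⊆ S.biUnion (fun a => A.filter (fun u => G.Adj a u)) := by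
      intro u hu
      simp only [hN, Finset.mem_filter, Finset.mem_sdiff] at hu
      simp only [Finset.mem_biUnion, Finset.mem_filter]
      obtain ⟨⟨h1, _⟩, a, ha, h2⟩ := hu
      exact ⟨a, ha, h1, h2⟩
    refine (Finset.card_le_card this).trans (Finset.card_biUnion_le.trans ?_)
    rw [hS, Finset.sum_insert hvS]
    rfl
  have hAS : (A \ S).card = (s + 2) * (j + 1) - (s + 2) := by
    rw [Finset.card_sdiff_of_subset hSA, hA, hScard]
  have hNsub : N ⊆ A \ S := Finset.filter_subset _ _
  have hNle := Finset.card_le_card hNsub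
  have hEA : EE G A ≤ (d + x) + (N.card * d + ((s + 2) * (j + 1) - (s + 2) - N.card) * z) := by
    have e1 : EE G A = ∑ u ∈ (A \ S) \ N, dg G A u + ∑ u ∈ N, dg G A u + (d + x) := by
      rw [Finset.sum_sdiff hNsub, ← Finset.sum_insert hvS, Finset.sum_sdiff hSA]; rfl
    have e2 : ∑ u ∈ N, dg G A u ≤ N.card * d := by
      rw [← smul_eq_mul]
      exact Finset.sum_le_card_nsmul _ _ _ fun u hu =>
        hmax u (Finset.sdiff_subset (hNsub hu))
    have e3 : ∑ u ∈ (A \ S) \ N, dg G A u ≤ ((s + 2) * (j + 1) - (s + 2) - N.card) * z := by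
      rw [← hAS, ← Finset.card_sdiff_of_subset hNsub, ← smul_eq_mul]
      apply Finset.sum_le_card_nsmul
      intro u hu
      rw [Finset.mem_sdiff] at hu
      obtain ⟨hu1, hu2⟩ := hu
      have hu3 := Finset.mem_sdiff.1 hu1
      apply hz2 u hu3.1 hu3.2
      intro a ha hadj
      exact hu2 (Finset.mem_filter.2 ⟨hu1, a, ha, hadj⟩)
    omega
  obtain ⟨u0, hu0, rfl⟩ := hzA
  have := ev_bound s (j + 1) d x _ N.card _ hz (hmax u0 hu0) hNc (by omega)
    (by rw [mul_add] at *; omega) hEA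
  nlinarith

theorem main_col (s : ℕ) (hs : 1 ≤ s) : ∀ (k : ℕ) (A : Finset V), 1 ≤ k →
    A.card = (s + 2) * k → EE G A < k * (k + 1) →
    (∀ v ∈ A, EE G A < 2 * dg G A v + 2 * tt s ((s + 2) * k - 1 - dg G A v)) →
    ∃ c : V → ℕ, (∀ v ∈ A, c v < k) ∧ (∀ u ∈ A, ∀ v ∈ A, G.Adj u v → c u ≠ c v) ∧
      ∀ i < k, (A.filter (fun v => c v = i)).card = s + 2 := by
  intro k
  induction k with
  | zero => intro A h; omega
  | succ k ih =>
    intro A _ hA hE hdeg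
    have hAne : A.Nonempty := Finset.card_pos.1 (by rw [hA]; positivity)
    obtain ⟨v, hv, hmax⟩ := Finset.exists_max_image A (dg G A) hAne
    obtain ⟨S₀, hS₀, hvS, hc, hi, z, hz, hzA, hz2⟩ := select G s (k + 1) hs A hA v hv (hdeg v hv)
    have hSA : insert v S₀ ⊆ A := Finset.insert_subset hv hS₀
    have hScard : (insert v S₀).card = s + 2 := by rw [Finset.card_insert_of_notMem hvS, hc]
    rcases Nat.eq_zero_or_pos k with rfl | hk
    · have hSeq : insert v S₀ = A := Finset.eq_of_subset_of_card_le hSA (by rw [hScard, hA]; omega)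
      refine ⟨fun _ => 0, by simp, ?_, ?_⟩
      · intro u hu w hw hadj
        exact absurd hadj (hi u (hSeq ▸ hu) w (hSeq ▸ hw))
      · intro i hi
        have : i = 0 := by omega
        subst this
        simp [hA]
    have hdrop := edge_drop G s (k + 1) (by omega) A hA hE v hv hmax S₀ hS₀ hvS hc hi z hz hzA hz2
    have h1 := EE_sdiff G hSA hi
    rw [Finset.sum_insert hvS] at h1
    set S := insert v S₀ with hS
    set A' := A \ S with hA'
    have hA'c : A'.card = (s + 2) * k := by
      rw [Finset.card_sdiff_of_subset hSA, hA, hScard, mul_add]; omega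
    obtain ⟨c, hc1, hc2, hc3⟩ := ih A' hk hA'c (by simpa [mul_comm] using hdrop) (by
      intro w hw
      by_contra hbad
      push Not at hbad
      have hwlt := dg_lt G hw
      have hwA : w ∈ A := Finset.sdiff_subset hw
      have hwS : w ∉ S := (Finset.mem_sdiff.1 hw).2
      have hsplit := dg_split G hSA w
      rw [← hA'] at hsplit
      have hwm := hmax w hwA
      have hvd := hdeg v hv
      have hvlt := dg_lt G hv
      set p := (s + 2) * k - 1 - dg G A' w with hp
      by_cases hcase : s * dg G A' w ≤ (s + 1) * p
      · have := num1 s (k + 1) p (dg G A' w) hs (by omega)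
          (by simp only [Nat.add_sub_cancel]; omega) hcase
        omega
      push Not at hcase
      have hmul : (s + 2) * (k + 1) = (s + 2) * k + (s + 2) := by ring
      by_cases hlt : dg G A' w < dg G A v
      · have := num2a s p (dg G A' w) ((s + 2) * (k + 1) - 1 - dg G A v) hs hcase (by omega)
        omega
      · have hS0 : dg G S w = 0 := by omega
        have hnon : ∀ a ∈ S, ¬ G.Adj a w := by
          intro a ha hadj
          classical
          unfold dg at hS0
          rw [Finset.card_eq_zero, Finset.filter_eq_empty_iff] at hS0
          exact hS0 ha hadj.symm
        have hwz := hz2 w hwA hwS hnon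
        have hx : (s + 1) * dg G A' w ≤ ∑ u ∈ S₀, dg G A u := by
          refine le_trans ?_ hz
          exact Nat.mul_le_mul_left _ (by omega)
        have := num2b s p (dg G A' w) ((s + 2) * (k + 1) - 1 - dg G A v) hs hcase (by omega)
        omega)
    refine ⟨fun u => if u ∈ S then k else c u, ?_, ?_, ?_⟩
    · intro u hu
      by_cases h : u ∈ S
      · simp [h]
      · simp only [h, if_false]
        have := hc1 u (Finset.mem_sdiff.2 ⟨hu, h⟩)
        omega
    · intro u hu w hw hadj
      by_cases h : u ∈ S <;> by_cases h' : w ∈ S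
      · exact absurd hadj (hi u h w h')
      · have := hc1 w (Finset.mem_sdiff.2 ⟨hw, h'⟩)
        simp only [h, h', if_true, if_false]; omega
      · have := hc1 u (Finset.mem_sdiff.2 ⟨hu, h⟩)
        simp only [h, h', if_true, if_false]; omega
      · simp only [h, h', if_false]
        exact hc2 u (Finset.mem_sdiff.2 ⟨hu, h⟩) w (Finset.mem_sdiff.2 ⟨hw, h'⟩) hadj
    · intro i hik
      by_cases hieq : i = k
      · subst hieq
        rw [← hScard]
        congr 1
        ext u
        simp only [Finset.mem_filter]
        constructor
        · rintro ⟨hu, h2⟩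
          by_contra h
          simp only [h, if_false] at h2
          have := hc1 u (Finset.mem_sdiff.2 ⟨hu, h⟩)
          omega
        · intro h; exact ⟨hSA h, by simp [h]⟩
      · rw [← hc3 i (by omega)]
        congr 1
        ext u
        simp only [Finset.mem_filter, hA', Finset.mem_sdiff]
        by_cases h : u ∈ S
        · simp [h]; omega
        · simp [h]

end

lemma deg_eq_dg {n : ℕ} (G : SimpleGraph (Fin n)) (v : Fin n) : deg G v = dg G Finset.univ v := by
  classical
  unfold deg dg
  rw [Nat.card_eq_fintype_card, Fintype.card_subtype]
  rfl

lemma two_edgeCount {n : ℕ} (G : SimpleGraph (Fin n)) :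
    2 * edgeCount G = EE G Finset.univ := by
  classical
  unfold edgeCount EE
  rw [Nat.card_eq_fintype_card, ← SimpleGraph.edgeFinset_card, ← G.sum_degrees_eq_twice_card_edges]
  apply Finset.sum_congr rfl
  intro v _
  unfold dg
  rw [← SimpleGraph.card_neighborFinset_eq_degree, SimpleGraph.neighborFinset_eq_filter]

lemma sum_rel (P : ℕ → ℕ → Prop) [∀ i j, Decidable (P i j)] (hsym : ∀ i j, P i j ↔ P j i)
    (hirr : ∀ i, ¬ P i i) (m : ℕ) :
    ∑ j ∈ Finset.range m, ((Finset.range m).filter (fun i => P j i)).card =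
      2 * ∑ j ∈ Finset.range m, ((Finset.range j).filter (fun i => P j i)).card := by
  simp only [Finset.card_filter]
  induction m with
  | zero => simp
  | succ m ih =>
    simp only [Finset.sum_range_succ _ m, Finset.sum_add_distrib, hirr, if_false]
    rw [ih]
    simp only [hsym _ m]
    ring

lemma deg_rel {n : ℕ} (G : SimpleGraph (Fin n)) (P : ℕ → ℕ → Prop) [∀ i j, Decidable (P i j)]
    (hG : ∀ i j : Fin n, G.Adj i j ↔ P i j) (v : Fin n) :
    deg G v = ((Finset.range n).filter (fun i => P v i)).card := by
  classical
  rw [deg_eq_dg]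
  unfold dg
  rw [Finset.card_filter, Finset.card_filter, Finset.sum_range]
  simp only [hG]

lemma edgeCount_rel {n : ℕ} (G : SimpleGraph (Fin n)) (P : ℕ → ℕ → Prop) [∀ i j, Decidable (P i j)]
    (hG : ∀ i j : Fin n, G.Adj i j ↔ P i j) (hsym : ∀ i j, P i j ↔ P j i)
    (hirr : ∀ i, ¬ P i i) :
    edgeCount G = ∑ j ∈ Finset.range n, ((Finset.range j).filter (fun i => P j i)).card := by
  have h := two_edgeCount G
  have h2 := sum_rel P hsym hirr n
  unfold EE at h
  simp only [← deg_eq_dg, deg_rel G P hG] at h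
  rw [Finset.sum_range] at h2
  omega

lemma count_mod (s j : ℕ) (hs : 1 ≤ s) :
    ((Finset.range j).filter (fun i => j ≠ i ∧ j % s = i % s)).card = j / s := by
  have h := Nat.count_modEq_card j (show 0 < s by omega) j
  rw [Nat.count_eq_card_filter_range] at h
  simp only [lt_irrefl, if_false, add_zero] at h
  rw [← h]
  congr 1
  apply Finset.filter_congr
  intro i hi
  have := Finset.mem_range.1 hi
  unfold Nat.ModEq
  constructor
  · rintro ⟨_, h⟩; exact h.symm
  · intro h; exact ⟨by omega, h.symm⟩

lemma turan_edges (s m : ℕ) (hs : 1 ≤ s) :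
    edgeCount ((SimpleGraph.turanGraph m s)ᶜ) = tt s m := by
  rw [edgeCount_rel _ (fun i j => i ≠ j ∧ i % s = j % s)]
  · unfold tt
    exact Finset.sum_congr rfl fun j _ => count_mod s j hs
  · intro i j
    simp [SimpleGraph.turanGraph, Fin.ext_iff]
  · intro i j; constructor <;> (rintro ⟨a, b⟩; exact ⟨a.symm, b.symm⟩)
  · simp

lemma g_mono (s n D : ℕ) (hs : 1 ≤ s) (hD : D + (s + 2) ≤ n) (d : ℕ) (hd : d ≤ D) :
    D + tt s (n - 1 - D) ≤ d + tt s (n - 1 - d) := by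
  induction D, hd using Nat.le_induction with
  | base => exact le_rfl
  | succ D hd ih =>
    refine le_trans ?_ (ih (by omega))
    rw [show n - 1 - D = (n - 1 - (D + 1)) + 1 by omega, tt_succ]
    have : 1 ≤ (n - 1 - (D + 1)) / s := by
      rw [Nat.one_le_div_iff (by omega)]; omega
    omega

lemma class_ge {n r k : ℕ} (hn : n = r * k) (c : Fin n → Fin k)
    (h : ∀ i j : Fin k, (Finset.univ.filter fun v => c v = i).card ≤
      (Finset.univ.filter fun v => c v = j).card + 1) (j : Fin k) :
    r ≤ (Finset.univ.filter fun v => c v = j).card := by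
  by_contra hlt
  push Not at hlt
  have h1 : ∑ i : Fin k, (Finset.univ.filter fun v => c v = i).card = n := by
    rw [← Finset.card_eq_sum_card_fiberwise (fun _ _ => by simp)]; simp
  have h2 : ∑ i : Fin k, (Finset.univ.filter fun v => c v = i).card < ∑ _i : Fin k, r := by
    apply Finset.sum_lt_sum
    · intro i _; have := h i j; omega
    · exact ⟨j, Finset.mem_univ _, hlt⟩
  simp at h2
  rw [h1, hn, mul_comm] at h2
  exact lt_irrefl _ h2

theorem part1 (s k D : ℕ) (hs : 1 ≤ s) (hk : 1 ≤ k) (hD : D + (s + 2) ≤ (s + 2) * k)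
    (G : SimpleGraph (Fin ((s + 2) * k))) (hdeg : ∀ v, deg G v ≤ D)
    (h1 : edgeCount G < (k + 1).choose 2)
    (h2 : edgeCount G < D + tt s ((s + 2) * k - 1 - D)) : HasEquitableColoring G k := by
  have hE := two_edgeCount G
  have hch : 2 * (k + 1).choose 2 = k * (k + 1) := by
    have := Nat.triangle_succ k
    rw [Nat.choose_two_right, Nat.mul_div_cancel' (Nat.even_mul_pred_self _).two_dvd]
    simp [mul_comm]
  obtain ⟨c, hc1, hc2, hc3⟩ := main_col G s hs k Finset.univ hk (by simp) (by omega) (by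
    intro v _
    rw [← deg_eq_dg]
    have := g_mono s _ D hs hD _ (hdeg v)
    omega)
  refine ⟨fun v => ⟨c v, hc1 v (Finset.mem_univ _)⟩, ?_, ?_⟩
  · intro u v hadj he
    exact hc2 u (Finset.mem_univ _) v (Finset.mem_univ _) hadj (by simpa using he)
  · intro i j
    simp only [Fin.ext_iff]
    rw [hc3 i i.2, hc3 j j.2]
    omega

/-- The clique example. -/
theorem part2a (n k D : ℕ) (hkn : k + 1 ≤ n) (hD : k ≤ D) :
    ∃ G' : SimpleGraph (Fin n), (∀ v, deg G' v ≤ D) ∧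
      edgeCount G' = (k + 1).choose 2 ∧ ¬ HasEquitableColoring G' k := by
  let P : ℕ → ℕ → Prop := fun i j => i ≠ j ∧ i ≤ k ∧ j ≤ k
  let G : SimpleGraph (Fin n) :=
    { Adj := fun i j => P i j
      symm := ⟨by rintro i j ⟨a, b, c⟩; exact ⟨a.symm, c, b⟩⟩
      loopless := ⟨by rintro i ⟨a, _⟩; exact a rfl⟩ }
  have hG : ∀ i j : Fin n, G.Adj i j ↔ P i j := fun _ _ => Iff.rfl
  classical
  refine ⟨G, ?_, ?_, ?_⟩
  · intro v
    rw [deg_rel G P hG]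
    refine le_trans ?_ hD
    by_cases hv : (v : ℕ) ≤ k
    · have : (Finset.range n).filter (fun i => P v i) ⊆ (Finset.range (k + 1)).erase v := by
        intro i hi
        simp only [P, Finset.mem_filter] at hi
        simp only [Finset.mem_erase, Finset.mem_range]
        omega
      refine (Finset.card_le_card this).trans ?_
      rw [Finset.card_erase_of_mem (by simp; omega)]
      simp
    · rw [Finset.filter_eq_empty_iff.2]
      · simp
      · intro i _ h; exact hv h.2.1
  · rw [edgeCount_rel G P hG (fun i j => by simp only [P]; tauto) (by simp [P])]
    have h1 : ∀ j, ((Finset.range j).filter (fun i => P j i)).card = if j < k + 1 then j else 0 := by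
      intro j
      split_ifs with h
      · rw [Finset.filter_true_of_mem, Finset.card_range]
        intro i hi
        have := Finset.mem_range.1 hi
        simp only [P]; omega
      · rw [Finset.card_eq_zero, Finset.filter_eq_empty_iff]
        intro i _ h'
        simp only [P] at h'; omega
    simp only [h1]
    rw [← Finset.sum_filter, Nat.choose_two_right, ← Finset.sum_range_id]
    congr 1
    ext j; simp; omega
  · rintro ⟨c, hc, -⟩
    have : Function.Injective (fun i : Fin (k + 1) => c ⟨i, by omega⟩) := by
      intro i j hij
      by_contra hne
      refine hc _ _ ?_ hij
      refine ⟨?_, ?_, ?_⟩ <;> simp <;> omega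
    have := Fintype.card_le_of_injective _ this
    simp at this

/-- The star example. -/
theorem part2b (s k D : ℕ) (hs : 1 ≤ s) (hk : 1 ≤ k) (hD1 : k ≤ D) (hD : D + (s + 2) ≤ (s + 2) * k)
    (hlt : D + tt s ((s + 2) * k - 1 - D) < (k + 1).choose 2) :
    ∃ G' : SimpleGraph (Fin ((s + 2) * k)), (∀ v, deg G' v ≤ D) ∧
      edgeCount G' = D + tt s ((s + 2) * k - 1 - D) ∧ ¬ HasEquitableColoring G' k := by
  obtain ⟨m, hm⟩ : ∃ m, (s + 2) * k = D + 1 + m := ⟨(s + 2) * k - (D + 1), by omega⟩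
  have hm' : (s + 2) * k - 1 - D = m := by omega
  rw [hm'] at hlt ⊢
  clear hm'
  generalize hn : (s + 2) * k = n at *
  have hmD : (m - 1) / s ≤ D := by
    by_contra hc
    push Not at hc
    have h1 : s * (D + 1) ≤ m := by
      have h3 : D + 1 ≤ (m - 1) / s := hc
      rw [Nat.le_div_iff_mul_le (by omega)] at h3
      rw [mul_comm]; omega
    have h2 := tt_mono s h1
    have h3 := tt_sq s (s * (D + 1)) hs
    have h4 : s * (D + 1) * (D + 1) ≤ 2 * tt s (s * (D + 1)) + s * (D + 1) := by
      refine le_of_mul_le_mul_left (a := s) ?_ (by omega)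
      nlinarith
    have h5 : (D + 1) * D ≤ 2 * tt s (s * (D + 1)) := by
      have : s * ((D + 1) * D) ≤ 2 * tt s (s * (D + 1)) := by nlinarith
      nlinarith [Nat.zero_le ((D + 1) * D)]
    have hch : 2 * (k + 1).choose 2 = k * (k + 1) := by
      rw [Nat.choose_two_right, Nat.mul_div_cancel' (Nat.even_mul_pred_self _).two_dvd]
      simp [mul_comm]
    nlinarith
  let P : ℕ → ℕ → Prop := fun i j => i ≠ j ∧
    ((i = 0 ∧ j ≤ D) ∨ (j = 0 ∧ i ≤ D) ∨ (D < i ∧ D < j ∧ (i - (D + 1)) % s = (j - (D + 1)) % s))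
  have hPsym : ∀ i j, P i j → P j i := by
    rintro i j ⟨a, b⟩
    refine ⟨a.symm, ?_⟩
    rcases b with b | b | ⟨b1, b2, b3⟩
    · exact Or.inr (Or.inl b)
    · exact Or.inl b
    · exact Or.inr (Or.inr ⟨b2, b1, b3.symm⟩)
  let G : SimpleGraph (Fin n) :=
    { Adj := fun i j => P i j
      symm := ⟨fun i j h => hPsym _ _ h⟩
      loopless := ⟨by rintro i ⟨a, _⟩; exact a rfl⟩ }
  have hG : ∀ i j : Fin n, G.Adj i j ↔ P i j := fun _ _ => Iff.rfl
  classical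
  refine ⟨G, ?_, ?_, ?_⟩
  · intro v
    rw [deg_rel G P hG]
    rcases Nat.eq_zero_or_pos (v : ℕ) with hv0 | hv0
    · have : (Finset.range n).filter (fun i => P v i) ⊆ (Finset.range (D + 1)).erase 0 := by
        intro i hi
        simp only [P, Finset.mem_filter] at hi
        simp only [Finset.mem_erase, Finset.mem_range]
        omega
      refine (Finset.card_le_card this).trans ?_
      rw [Finset.card_erase_of_mem (by simp)]
      simp
    by_cases hv : (v : ℕ) ≤ D
    · have : (Finset.range n).filter (fun i => P v i) ⊆ {0} := by
        intro i hi
        simp only [P, Finset.mem_filter] at hi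
        simp only [Finset.mem_singleton]
        omega
      refine (Finset.card_le_card this).trans ?_
      simp; omega
    · push Not at hv
      obtain ⟨a, ha⟩ : ∃ a, (v : ℕ) = D + 1 + a := ⟨v - (D + 1), by omega⟩
      have ham : a < m := by have := v.2; omega
      have hsub : (Finset.range n).filter (fun i => P v i) ⊆
          (((Finset.range m).filter (fun i => i ≡ a [MOD s])).erase a).image (fun i => D + 1 + i) := by
        intro i hi
        simp only [P, Finset.mem_filter, Finset.mem_range] at hi
        obtain ⟨hi0, hi1, hi2⟩ := hi
        have hi3 : D < i ∧ ((v : ℕ) - (D + 1)) % s = (i - (D + 1)) % s := by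
          rcases hi2 with h | h | h
          · omega
          · omega
          · exact ⟨h.2.1, h.2.2⟩
        simp only [Finset.mem_image, Finset.mem_erase, Finset.mem_filter, Finset.mem_range]
        refine ⟨i - (D + 1), ⟨by omega, by omega, ?_⟩, by omega⟩
        have := hi3.2
        rw [ha, Nat.add_sub_cancel_left] at this
        exact this.symm
      refine (Finset.card_le_card hsub).trans (Finset.card_image_le.trans ?_)
      rw [Finset.card_erase_of_mem 
        (by rw [Finset.mem_filter]; exact ⟨Finset.mem_range.2 ham, Nat.ModEq.refl _⟩), ← Nat.count_eq_card_filter_range,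
        Nat.count_modEq_card m (show 0 < s by omega) a]
      have hd1 : m / s ≤ (m - 1) / s + 1 := by
        rw [← Nat.add_div_right _ (by omega : 0 < s)]
        exact Nat.div_le_div_right (by omega)
      split_ifs with h
      · have hd2 : m / s ≤ (m - 1) / s := by
          rw [Nat.le_div_iff_mul_le (by omega)]
          have := Nat.div_add_mod m s
          rw [mul_comm]; omega
        omega
      · omega
  · rw [edgeCount_rel G P hG (fun i j => ⟨hPsym _ _, hPsym _ _⟩) (by simp [P]), hm,
      Finset.sum_range_add, Finset.sum_range_succ']
    have h1 : ∀ j ∈ Finset.range D, ((Finset.range (j + 1)).filter (fun i => P (j + 1) i)).card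
        = 1 := by
      intro j hj
      have hj := Finset.mem_range.1 hj
      rw [Finset.card_eq_one]
      refine ⟨0, ?_⟩
      ext i
      simp only [P, Finset.mem_filter, Finset.mem_range, Finset.mem_singleton]
      constructor
      · rintro ⟨h1, h2, h3⟩; omega
      · rintro rfl; omega
    have h2 : ∀ j ∈ Finset.range m,
        ((Finset.range (D + 1 + j)).filter (fun i => P (D + 1 + j) i)).card = j / s := by
      intro j hj
      rw [← count_mod s j hs]
      refine Eq.trans ?_ (Finset.card_image_of_injective
        ((Finset.range j).filter (fun i => j ≠ i ∧ j % s = i % s)) (add_right_injective (D + 1)))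
      congr 1
      ext i
      simp only [P, Finset.mem_filter, Finset.mem_range, Finset.mem_image, Nat.add_sub_cancel_left]
      constructor
      · rintro ⟨h1, h2, h3⟩
        have h4 : D < i ∧ j % s = (i - (D + 1)) % s := by
          rcases h3 with h | h | h
          · omega
          · omega
          · exact ⟨h.2.1, h.2.2⟩
        exact ⟨i - (D + 1), ⟨by omega, by omega, h4.2⟩, by omega⟩
      · rintro ⟨a, ⟨h1, h2, h3⟩, rfl⟩
        refine ⟨by omega, by omega, Or.inr (Or.inr ⟨by omega, by omega, ?_⟩)⟩
        rw [Nat.add_sub_cancel_left]; exact h3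
    rw [Finset.sum_congr rfl h1, Finset.sum_congr rfl h2]
    simp [tt]
  · rintro ⟨c, hc, heq⟩
    have hn0 : 0 < n := by omega
    let o : Fin n := ⟨0, hn0⟩
    have h1 := class_ge hn.symm c heq (c o)
    set C := (Finset.univ.filter fun v => c v = c o) with hC
    have hCmem : ∀ v ∈ C, c v = c o := fun v hv => (Finset.mem_filter.1 hv).2
    have hbig : ∀ v ∈ C.erase o, D < (v : ℕ) := by
      intro v hv
      obtain ⟨hvo, hvC⟩ := Finset.mem_erase.1 hv
      by_contra hle
      push Not at hle
      refine hc o v ?_ (hCmem v hvC).symm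
      refine ⟨?_, Or.inl ⟨rfl, hle⟩⟩
      intro h; exact hvo (Fin.ext h.symm)
    have hcard : (C.erase o).card = C.card - 1 :=
      Finset.card_erase_of_mem (by simp [hC])
    obtain ⟨a, ha, b, hb, hab, hmod⟩ := Finset.exists_ne_map_eq_of_card_lt_of_maps_to
      (s := C.erase o) (t := Finset.range s) (f := fun v => ((v : ℕ) - (D + 1)) % s)
      (by rw [Finset.card_range]; omega)
      (by intro v _; simp; exact Nat.mod_lt _ (by omega))
    refine hc a b ⟨fun h => hab (Fin.ext h), Or.inr (Or.inr ⟨hbig a ha, hbig b hb, hmod⟩)⟩ ?_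
    rw [hCmem a (Finset.mem_of_mem_erase ha), hCmem b (Finset.mem_of_mem_erase hb)]

/-- Let `r ≥ 3` divide `n` and `n/r ≤ D ≤ n - r`. Every graph on `n` vertices with maximum
degree at most `D` and fewer than `f(n,r,D)` edges has an equitable `n/r`-colouring, and
there is a graph with maximum degree at most `D` and exactly `f(n,r,D)` edges with no
equitable `n/r`-colouring. -/
theorem stmt2 (n r D : ℕ) (hr : 3 ≤ r) (hdvd : r ∣ n) (hn : 0 < n)
    (hD1 : n / r ≤ D) (hD2 : D ≤ n - r) :
    (∀ G : SimpleGraph (Fin n), (∀ v, deg G v ≤ D) →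
      edgeCount G < fFun n r D → HasEquitableColoring G (n / r)) ∧
    (∃ G' : SimpleGraph (Fin n), (∀ v, deg G' v ≤ D) ∧
      edgeCount G' = fFun n r D ∧ ¬ HasEquitableColoring G' (n / r)) := by
  obtain ⟨k, rfl⟩ := hdvd
  obtain ⟨s, rfl⟩ : ∃ s, r = s + 2 := ⟨r - 2, by omega⟩
  have hs : 1 ≤ s := by omega
  have hk : 1 ≤ k := Nat.pos_of_ne_zero (by rintro rfl; simp at hn)
  have hdiv : (s + 2) * k / (s + 2) = k := Nat.mul_div_cancel_left _ (by omega)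
  have hf : fFun ((s + 2) * k) (s + 2) D =
      min ((k + 1).choose 2) (D + tt s ((s + 2) * k - 1 - D)) := by
    unfold fFun
    rw [hdiv, show s + 2 - 2 = s by omega, turan_edges _ _ hs,
      show (s + 2) * k - D - 1 = (s + 2) * k - 1 - D by omega]
  rw [hf, hdiv]
  rw [hdiv] at hD1
  have hle : s + 2 ≤ (s + 2) * k := Nat.le_mul_of_pos_right _ hk
  have hD : D + (s + 2) ≤ (s + 2) * k := by omega
  refine ⟨?_, ?_⟩
  · intro G hG he
    rw [lt_min_iff] at he
    exact part1 s k D hs hk hD G hG he.1 he.2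
  · by_cases hlt : D + tt s ((s + 2) * k - 1 - D) < (k + 1).choose 2
    · rw [min_eq_right hlt.le]
      exact part2b s k D hs hk hD1 hD hlt
    · push Not at hlt
      rw [min_eq_left hlt]
      exact part2a _ k D (by omega) hD1
end

section
/- Let n, r ∈ ℕ with r ≥ 2 and r dividing n. Suppose G is a graph on n vertices with degree sequence d_1 ≤ ⋯ ≤ d_n such that d_i ≥ (r−2)n/r + i for all i < n/r, and d_{n/r+1} ≥ (r−1)n/r. Suppose further that no vertex x of G with degree less than (r−1)n/r lies in a copy of K_{r+1}. Then G contains a perfect K_r-packing. -/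
/-- A perfect `K_r`-packing: a collection of vertex-disjoint `r`-cliques covering all vertices. -/
def HasPerfectKrPacking {n : ℕ} (G : SimpleGraph (Fin n)) (r : ℕ) : Prop :=
  ∃ P : Finset (Finset (Fin n)),
    (∀ p ∈ P, p.card = r ∧ G.IsClique (p : Set (Fin n))) ∧
    (P : Set (Finset (Fin n))).PairwiseDisjoint id ∧
    P.biUnion id = Finset.univ


set_option linter.unusedSectionVars false

namespace HS
open Finset Relation
open scoped Classical

def Rst {C : Type} (R : C → C → Prop) (Q : C → Prop) (a b : C) : Prop := R a b ∧ Q a ∧ Q b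

lemma first {C : Type} (R : C → C → Prop) (Q : C → Prop) (x a : C) (hxa : x ≠ a)
    (h : ReflTransGen (Rst R Q) x a) :
    Q x ∧ ∃ c, R x c ∧ Q c ∧ c ≠ x ∧ ReflTransGen (Rst R (fun d => Q d ∧ d ≠ x)) c a := by
  have hQ : Q x := by
    rcases ReflTransGen.cases_head h with h | ⟨c, h, _⟩
    · exact absurd h hxa
    · exact h.2.1
  refine ⟨hQ, ?_⟩
  have key : ∀ b, ReflTransGen (Rst R Q) b a →
      (b ≠ x ∧ ReflTransGen (Rst R (fun d => Q d ∧ d ≠ x)) b a) ∨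
      ∃ c, R x c ∧ Q c ∧ c ≠ x ∧ ReflTransGen (Rst R (fun d => Q d ∧ d ≠ x)) c a := by
    intro b hb
    induction hb using ReflTransGen.head_induction_on with
    | refl => exact Or.inl ⟨hxa.symm, .refl⟩
    | @head b c hbc _ ih =>
      rcases ih with ⟨h1, h2⟩ | h
      · by_cases hb : b = x
        · subst hb
          exact Or.inr ⟨c, hbc.1, hbc.2.2, h1, h2⟩
        · exact Or.inl ⟨hb, .head ⟨hbc.1, ⟨hbc.2.1, hb⟩, hbc.2.2, h1⟩ h2⟩
      · exact Or.inr h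
  rcases key x h with h | h
  · exact absurd rfl h.1
  · exact h

lemma digraph {C : Type} [Fintype C] (R : C → C → Prop) (v0 : C)
    (hne : ∃ c, c ≠ v0 ∧ ReflTransGen R c v0) :
    ∃ U, ∃ T : Finset C, T.Nonempty ∧ U ∉ T ∧ ReflTransGen R U v0 ∧
      ∀ W ∈ T, W ≠ v0 ∧ ReflTransGen R W v0 ∧
        (∀ X, ReflTransGen R X v0 → R W X → X = U ∨ X ∈ T) ∧
        (∀ X, ReflTransGen R X v0 → X ≠ W →
          ReflTransGen (Rst R (fun d => ReflTransGen R d v0 ∧ d ≠ W)) X v0) := by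
  let RA : C → C → Prop := fun U c => ReflTransGen (Rst R (fun d => d ≠ U)) c v0
  let T : C → Finset C := fun U => univ.filter (fun c => c ≠ U ∧ ReflTransGen R c v0 ∧ ¬ RA U c)
  have memT : ∀ U c, c ∈ T U ↔ c ≠ U ∧ ReflTransGen R c v0 ∧ ¬ RA U c := by
    intro U c; simp [T]
  have hS : (univ.filter (fun U => ReflTransGen R U v0 ∧ (T U).Nonempty)).Nonempty := by
    obtain ⟨c, hc, hr⟩ := hne
    refine ⟨v0, ?_⟩
    simp only [mem_filter, mem_univ, true_and]
    refine ⟨.refl, c, (memT _ _).2 ⟨hc, hr, ?_⟩⟩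
    intro h
    rcases ReflTransGen.cases_tail h with h | ⟨b, _, h⟩
    · exact hc h.symm
    · exact h.2.2 rfl
  obtain ⟨U, hU, hmin⟩ := exists_min_image _ (fun U => (T U).card) hS
  simp only [mem_filter, mem_univ, true_and] at hU hmin
  refine ⟨U, T U, hU.2, fun h => ((memT _ _).1 h).1 rfl, hU.1, ?_⟩
  intro W hW
  obtain ⟨hWU, hWr, hWn⟩ := (memT _ _).1 hW
  have hW0 : W ≠ v0 := by
    rintro rfl; exact hWn .refl
  refine ⟨hW0, hWr, ?_, ?_⟩
  · intro X hX hWX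
    by_contra hcon
    push Not at hcon
    have : RA U X := by
      by_contra h
      exact hcon.2 ((memT _ _).2 ⟨hcon.1, hX, h⟩)
    exact hWn (.head ⟨hWX, hWU, hcon.1⟩ this)
  · have trans1 : ∀ c, RA U c → RA W c ∧ c ≠ W := by
      intro c hc
      refine ⟨?_, fun h => hWn (h ▸ hc)⟩
      induction hc using ReflTransGen.head_induction_on with
      | refl => exact .refl
      | @head b c hbc hc ih =>
        refine .head ⟨hbc.1, ?_, ?_⟩ ih
        · rintro rfl; exact hWn (.head hbc hc)
        · rintro rfl; exact hWn hc
    have hRWU : RA W U := by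
      by_cases h : U = v0
      · rw [h]
      · have h1 : ReflTransGen (Rst R (fun _ => True)) U v0 :=
          ReflTransGen.mono (fun a b h => ⟨h, trivial, trivial⟩) _ _ hU.1
        obtain ⟨_, c, h2, _, h3, h4⟩ := first R _ U v0 h h1
        have h5 : RA U c := ReflTransGen.mono (fun a b h => ⟨h.1, h.2.1.2, h.2.2.2⟩) _ _ h4
        obtain ⟨h6, h7⟩ := trans1 c h5
        exact .head ⟨h2, hWU.symm, h7⟩ h6
    intro X hX hXW
    have hRX : RA W X := by
      by_contra hcon
      have h1 := hmin W ⟨hWr, X, (memT _ _).2 ⟨hXW, hX, hcon⟩⟩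
      have h2 : T W ⊂ T U := by
        refine (ssubset_iff_of_subset ?_).2 ⟨W, hW, fun h => ((memT _ _).1 h).1 rfl⟩
        intro c hc
        obtain ⟨g1, g2, g3⟩ := (memT _ _).1 hc
        refine (memT _ _).2 ⟨?_, g2, fun h => g3 (trans1 c h).1⟩
        rintro rfl; exact g3 hRWU
      exact absurd (card_lt_card h2) (by omega)
    clear hX hXW
    have toR : ∀ c, RA W c → ReflTransGen R c v0 := fun c h => ReflTransGen.mono (fun a b h => h.1) _ _ h
    induction hRX using ReflTransGen.head_induction_on with
    | refl => exact .refl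
    | @head b c hbc hc ih =>
      exact .head ⟨hbc.1, ⟨toR b (.head hbc hc), hbc.2.1⟩, toR c hc, hbc.2.2⟩ ih

variable {V C : Type} [Fintype V] [Fintype C]

def Proper (G : SimpleGraph V) (f : V → C) : Prop := ∀ u v, G.Adj u v → f u ≠ f v
def Mov (G : SimpleGraph V) (f : V → C) (y : V) (c : C) : Prop := ∀ w, G.Adj y w → f w ≠ c
def R (G : SimpleGraph V) (f : V → C) (a b : C) : Prop := ∃ y, f y = a ∧ Mov G f y b
noncomputable def cnt (f : V → C) (c : C) : ℕ := (univ.filter (fun v => f v = c)).card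
noncomputable def nb (G : SimpleGraph V) (f : V → C) (y : V) (c : C) : ℕ :=
  (univ.filter (fun w => G.Adj y w ∧ f w = c)).card
noncomputable def dg (G : SimpleGraph V) (y : V) : ℕ := (univ.filter (fun w => G.Adj y w)).card

lemma proper_update (G : SimpleGraph V) (f : V → C) (hf : Proper G f) (y : V) (c : C)
    (h : Mov G f y c) : Proper G (Function.update f y c) := by
  intro u v huv
  by_cases hu : u = y
  · subst hu
    have : v ≠ u := huv.ne'
    simp [this, Function.update_of_ne]
    exact (h v huv).symm
  · by_cases hv : v = y
    · subst hv
      simp [hu, Function.update_of_ne]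
      exact h u huv.symm
    · simp [hu, hv, Function.update_of_ne]
      exact hf u v huv

lemma cnt_update (f : V → C) (y : V) (c d : C) :
    cnt (Function.update f y c) d + (if d = f y then 1 else 0) =
      cnt f d + (if d = c then 1 else 0) := by
  have key : ∀ g : V → C, cnt g d = (if d = g y then 1 else 0) +
      ((univ.erase y).filter (fun v => g v = d)).card := by
    intro g
    unfold cnt
    conv_lhs => rw [← insert_erase (mem_univ y)]
    rw [filter_insert]
    split_ifs with h1 h2 h2
    · rw [card_insert_of_notMem (by simp)]; omega
    · exact absurd h1.symm h2
    · exact absurd h2.symm h1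
    · omega
  rw [key, key f]
  have : (univ.erase y).filter (fun v => Function.update f y c v = d) =
      (univ.erase y).filter (fun v => f v = d) := by
    apply filter_congr
    intro x hx
    rw [Function.update_of_ne (ne_of_mem_erase hx)]
  rw [this]
  simp only [Function.update_self]
  omega

lemma shift (G : SimpleGraph V) (f : V → C) (hf : Proper G f) (a : C) :
    ∀ (N : ℕ) (Q : C → Prop) (x : C), (univ.filter Q).card < N →
    ReflTransGen (Rst (R G f) Q) x a →
    ∃ f' : V → C, Proper G f' ∧ (∀ v, ¬ Q (f v) → f' v = f v) ∧ (∀ v, Q (f v) → Q (f' v)) ∧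
      (∀ v, f' v = x → f v = x) ∧
      ∀ c, cnt f' c + (if c = x then 1 else 0) = cnt f c + (if c = a then 1 else 0) := by
  intro N
  induction N with
  | zero => intro Q x h; omega
  | succ N ih =>
    intro Q x hN h
    by_cases hxa : x = a
    · subst hxa
      exact ⟨f, hf, fun _ _ => rfl, fun _ h => h, fun _ h => h, fun _ => rfl⟩
    obtain ⟨hQx, c1, ⟨y, hy, hm⟩, hQc, hcx, hreach⟩ := first _ _ _ _ hxa h
    have hlt : (univ.filter (fun d => Q d ∧ d ≠ x)).card < (univ.filter Q).card := by
      apply card_lt_card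
      refine (ssubset_iff_of_subset ?_).2 ⟨x, by simpa using hQx, by simp⟩
      intro c; simp; tauto
    obtain ⟨f1, p1, p2, p3, p4, p5⟩ := ih (fun d => Q d ∧ d ≠ x) c1 (by
      refine lt_of_le_of_lt (le_of_eq ?_) (lt_of_lt_of_le hlt (Nat.lt_succ_iff.1 hN))
      congr) hreach
    have hy1 : f1 y = x := by rw [p2 y (by simp [hy]), hy]
    refine ⟨Function.update f1 y c1, proper_update G f1 p1 y c1 ?_, ?_, ?_, ?_, ?_⟩
    · intro w hw h; exact hm w hw (p4 w h)
    · intro v hv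
      have : v ≠ y := by rintro rfl; exact hv (hy ▸ hQx)
      rw [Function.update_of_ne this]
      exact p2 v (fun h => hv h.1)
    · intro v hv
      by_cases hvy : v = y
      · subst hvy; simpa using hQc
      · rw [Function.update_of_ne hvy]
        by_cases h : f v = x
        · rw [p2 v (by simp [h])]; exact hv
        · exact (p3 v ⟨hv, h⟩).1
    · intro v hv
      by_cases hvy : v = y
      · subst hvy; exact hy
      · rw [Function.update_of_ne hvy] at hv
        by_contra h
        by_cases hq : Q (f v)
        · exact (p3 v ⟨hq, h⟩).2 hv
        · exact h ((p2 v (fun h => hq h.1)).symm.trans hv)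
    · intro c
      have e1 := cnt_update f1 y c1 c
      rw [hy1] at e1
      have e2 := p5 c
      omega

lemma dg_eq (G : SimpleGraph V) (f : V → C) (y : V) : dg G y = ∑ c, nb G f y c := by
  unfold dg nb
  rw [card_eq_sum_card_fiberwise (f := f) (t := univ) (by simp)]
  simp [filter_filter]

lemma nb_pos (G : SimpleGraph V) (f : V → C) (y : V) (c : C) (h : ¬ Mov G f y c) :
    1 ≤ nb G f y c := by
  unfold Mov at h
  push Not at h
  obtain ⟨w, h1, h2⟩ := h
  exact card_pos.2 ⟨w, by simp [h1, h2]⟩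

def HSk (k : ℕ) : Prop := ∀ (V C : Type) [Fintype V] [Fintype C] (G : SimpleGraph V) (s : ℕ),
  Fintype.card C = k → Fintype.card V = s * k → (∀ v, dg G v < k) →
    ∃ f : V → C, Proper G f ∧ ∀ c, cnt f c = s

lemma recolor (k : ℕ) (IH : ∀ k' < k, HSk k') (G : SimpleGraph V) (s : ℕ) (X : Finset V)
    (D : Finset C) (hD : D.card < k) (hX : X.card = s * D.card)
    (hdeg : ∀ v ∈ X, (X.filter (fun w => G.Adj v w)).card < D.card) (f : V → C) :
    ∃ g : V → C, (∀ v ∈ X, g v ∈ D) ∧ (∀ v, v ∉ X → g v = f v) ∧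
      (∀ u ∈ X, ∀ v ∈ X, G.Adj u v → g u ≠ g v) ∧
      ∀ c ∈ D, (X.filter (fun v => g v = c)).card = s := by
  obtain ⟨g, h1, h2⟩ := IH D.card hD {v // v ∈ X} {c // c ∈ D} (G.comap Subtype.val) s
    (by simp) (by simpa using hX) (by
      intro v
      refine lt_of_le_of_lt ?_ (hdeg v.1 v.2)
      unfold dg
      apply card_le_card_of_injOn Subtype.val
      · intro w hw
        simp at hw
        simp [hw]
      · intro a _ b _ h; exact Subtype.ext h)
  refine ⟨fun v => if h : v ∈ X then (g ⟨v, h⟩).1 else f v, ?_, ?_, ?_, ?_⟩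
  · intro v hv; simp [hv]
  · intro v hv; simp [hv]
  · intro u hu v hv huv
    simp only [hu, hv, dif_pos]
    intro h
    exact h1 ⟨u, hu⟩ ⟨v, hv⟩ huv (Subtype.ext h)
  · intro c hc
    rw [← h2 ⟨c, hc⟩]
    unfold cnt
    symm
    apply card_bij (fun v _ => v.1)
    · intro v hv
      simp only [mem_filter, mem_univ, true_and] at hv
      simp [hv]
    · intro a _ b _ h; exact Subtype.ext h
    · intro v hv
      simp only [mem_filter] at hv
      obtain ⟨hv, h⟩ := hv
      simp only [hv, dif_pos] at h
      exact ⟨⟨v, hv⟩, by simp only [mem_filter, mem_univ, true_and]; exact Subtype.ext h, rfl⟩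

end HS

namespace HS
open Finset Relation
open scoped Classical
variable {V C : Type} [Fintype V] [Fintype C]

noncomputable def dB (G : SimpleGraph V) (f : V → C) (A : Finset C) (y : V) : ℕ :=
  (univ.filter (fun w => G.Adj y w ∧ f w ∉ A)).card

def Solo (G : SimpleGraph V) (f : V → C) (T : Finset C) (y z : V) : Prop :=
  G.Adj y z ∧ f z ∈ T ∧ ∀ w, G.Adj y w → f w = f z → w = z

lemma dB_eq (G : SimpleGraph V) (f : V → C) (A : Finset C) (y : V) :
    dB G f A y + ∑ c ∈ A, nb G f y c = dg G y := by
  have h1 : dB G f A y = ∑ c ∈ Aᶜ, nb G f y c := by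
    unfold dB nb
    rw [card_eq_sum_card_fiberwise (f := f) (t := Aᶜ) (by intro w; simp)]
    apply sum_congr rfl
    intro c hc
    rw [filter_filter]
    congr 1
    apply filter_congr
    intro w _
    have : c ∉ A := by simpa using hc
    constructor
    · rintro ⟨⟨h1, h2⟩, h3⟩; exact ⟨h1, h3⟩
    · rintro ⟨h1, h3⟩; exact ⟨⟨h1, h3 ▸ this⟩, h3⟩
  rw [h1, dg_eq G f y, add_comm, sum_add_sum_compl]

lemma card_fib (f : V → C) (E : Finset C) :
    (univ.filter (fun v => f v ∈ E)).card = ∑ c ∈ E, cnt f c := by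
  unfold cnt
  rw [card_eq_sum_card_fiberwise (f := f) (t := E) (by intro w; simp)]
  apply sum_congr rfl
  intro c hc
  rw [filter_filter]
  congr 1
  apply filter_congr
  intro w _
  constructor
  · rintro ⟨h1, h2⟩; exact h2
  · intro h; exact ⟨h ▸ hc, h⟩

lemma degE (G : SimpleGraph V) (f : V → C) (A E : Finset C) (hE : E ⊆ A) (x : V)
    (hdeg : dg G x < Fintype.card C) (h : ∀ c ∈ E, ¬ Mov G f x c) :
    dB G f A x + E.card < A.card + Aᶜ.card := by
  rw [card_add_card_compl]
  have h1 := dB_eq G f A x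
  have h2 : ∑ c ∈ E, 1 ≤ ∑ c ∈ A, nb G f x c :=
    (sum_le_sum (fun c hc => nb_pos G f x c (h c hc))).trans
      (sum_le_sum_of_subset hE)
  simp at h2
  omega

lemma solo_count (G : SimpleGraph V) (f : V → C) (A T : Finset C) (hT : T ⊆ A) (y : V)
    (hdeg : dg G y < Fintype.card C) (h : ∀ c ∈ A, ¬ Mov G f y c) :
    T.card + 1 + dB G f A y ≤ Aᶜ.card + (univ.filter (fun z => Solo G f T y z)).card := by
  rw [← card_add_card_compl A] at hdeg
  have h1 := dB_eq G f A y
  have h2 : ∑ c ∈ A, (1 + if c ∈ T ∧ nb G f y c ≠ 1 then 1 else 0) ≤ ∑ c ∈ A, nb G f y c := by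
    apply sum_le_sum
    intro c hc
    have := nb_pos G f y c (h c hc)
    split_ifs with hh
    · omega
    · omega
  rw [sum_add_distrib, sum_boole] at h2
  simp at h2
  have h3 : (A.filter (fun c => c ∈ T ∧ nb G f y c ≠ 1)) = T.filter (fun c => ¬ nb G f y c = 1) := by
    ext c
    simp only [mem_filter]
    constructor
    · rintro ⟨_, h⟩; exact h
    · intro h; exact ⟨hT h.1, h⟩
  have h2' : A.card + (A.filter (fun c => c ∈ T ∧ nb G f y c ≠ 1)).card ≤
    ∑ c ∈ A, nb G f y c := h2
  rw [h3] at h2'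
  have h4 := card_filter_add_card_filter_not (s := T) (fun c => nb G f y c = 1)
  have h5 : (T.filter (fun c => nb G f y c = 1)).card ≤
      (univ.filter (fun z => Solo G f T y z)).card := by
    refine (card_le_card ?_).trans (card_image_le (f := f))
    intro c hc
    rw [mem_filter] at hc
    unfold nb at hc
    obtain ⟨hcT, hc⟩ := hc
    obtain ⟨z, hz⟩ := card_eq_one.1 hc
    have hz' : ∀ w, (G.Adj y w ∧ f w = c) ↔ w = z := by
      intro w
      have := congrArg (fun S => w ∈ S) hz
      simpa using this
    have hzz := (hz' z).2 rfl
    simp only [mem_image, mem_filter, mem_univ, true_and]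
    refine ⟨z, ⟨hzz.1, hzz.2 ▸ hcT, ?_⟩, hzz.2⟩
    intro w hw hw2
    exact (hz' w).1 ⟨hw, hw2.trans hzz.2⟩
  omega

lemma lemma_two (G : SimpleGraph V) (f : V → C) (A T : Finset C) (hT : T ⊆ A) (U W : C) (s : ℕ)
    (hUA : U ∈ A) (hUT : U ∉ T) (hW : W ∈ T)
    (hdeg : ∀ v, dg G v < Fintype.card C) (hB : ∀ y, f y ∉ A → ∀ c ∈ A, ¬ Mov G f y c)
    (hTm : ∀ x, f x ∈ T → ∀ c ∈ A, c ≠ U → c ∉ T → ¬ Mov G f x c)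
    (hWm : ∀ z y, f z = W → f y ∉ A → Solo G f T y z → ∀ X ∈ A, X ≠ W → ¬ Mov G f z X)
    (hcW : cnt f W = s) (hcB : (univ.filter (fun v => f v ∉ A)).card = s * Aᶜ.card + 1) :
    Aᶜ.card < T.card := by
  set q := Aᶜ.card with hq
  set t := T.card with ht
  set B := univ.filter (fun v => f v ∉ A) with hBdef
  let isS : V → Prop := fun z => ∃ y, f y ∉ A ∧ Solo G f T y z
  let S := univ.filter (fun z => f z = W ∧ isS z)
  let D := univ.filter (fun z => f z = W ∧ ¬ isS z)
  have hSD : S.card + D.card = s := by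
    rw [← hcW]
    unfold cnt
    rw [← card_filter_add_card_filter_not (s := univ.filter (fun v => f v = W)) isS,
      filter_filter, filter_filter]
  have hApos : 0 < A.card := card_pos.2 ⟨U, hUA⟩
  let B1 := B.filter (fun y => ∃ z ∈ S, G.Adj y z)
  let B2 := B.filter (fun y => ¬ ∃ z ∈ S, G.Adj y z)
  have hBB : B1.card + B2.card = B.card := card_filter_add_card_filter_not _
  have hB1 : B1.card ≤ S.card * q := by
    have : B1 ⊆ S.biUnion (fun z => univ.filter (fun w => G.Adj z w ∧ f w ∉ A)) := by
      intro y hy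
      simp only [B1, B, mem_filter, mem_univ, true_and] at hy
      obtain ⟨hy, z, hz, hyz⟩ := hy
      simp only [mem_biUnion, mem_filter, mem_univ, true_and]
      exact ⟨z, hz, hyz.symm, hy⟩
    refine (card_le_card this).trans (card_biUnion_le_card_mul _ _ _ ?_)
    intro z hz
    simp only [S, mem_filter, mem_univ, true_and] at hz
    obtain ⟨hzW, y, hy, hyz⟩ := hz
    have := degE G f A (A.erase W) (erase_subset _ _) z (hdeg z) (by
      intro c hc
      rw [mem_erase] at hc
      exact hWm z y hzW hy hyz c hc.2 hc.1)
    rw [card_erase_of_mem (hT hW)] at this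
    unfold dB at this
    omega
  have hTU : t + 1 ≤ A.card := by
    have : (insert U T).card ≤ A.card := card_le_card (insert_subset hUA hT)
    rwa [card_insert_of_notMem hUT] at this
  have hlow : B2.card * 2 ≤ ∑ y ∈ B2, (D.filter (fun z => G.Adj y z)).card := by
    rw [← smul_eq_mul]
    apply card_nsmul_le_sum
    intro y hy
    simp only [B2, B, mem_filter, mem_univ, true_and] at hy
    obtain ⟨hy, hn⟩ := hy
    have h1 := hB y hy W (hT hW)
    unfold Mov at h1
    push Not at h1
    obtain ⟨z, hz, hzW⟩ := h1
    have memD : ∀ w, G.Adj y w → f w = W → w ∈ D.filter (fun z => G.Adj y z) := by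
      intro w hw hwW
      simp only [D, mem_filter, mem_univ, true_and]
      refine ⟨⟨hwW, fun h => hn ⟨w, ?_, hw⟩⟩, hw⟩
      simp only [S, mem_filter, mem_univ, true_and]
      exact ⟨hwW, h⟩
    have h2 : ¬ isS z := by
      have := memD z hz hzW
      simp only [D, mem_filter, mem_univ, true_and] at this
      exact this.1.2
    have h3 : ∃ w, G.Adj y w ∧ f w = W ∧ w ≠ z := by
      by_contra hcon
      push Not at hcon
      exact h2 ⟨y, hy, hz, hzW ▸ hW, fun w hw h => hcon w hw (h.trans hzW)⟩
    obtain ⟨w, hw, hwW, hwz⟩ := h3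
    exact one_lt_card.2 ⟨w, memD w hw hwW, z, memD z hz hzW, hwz⟩
  have hup : ∑ y ∈ B2, (D.filter (fun z => G.Adj y z)).card ≤ D.card * (q + t) := by
    have : ∑ y ∈ B2, (D.filter (fun z => G.Adj y z)).card =
      ∑ z ∈ D, (B2.filter (fun y => G.Adj y z)).card :=
        sum_card_bipartiteAbove_eq_sum_card_bipartiteBelow _
    rw [this, ← smul_eq_mul]
    apply sum_le_card_nsmul
    intro x hx
    simp only [D, mem_filter, mem_univ, true_and] at hx
    have h1 := degE G f A (A \ (insert U T)) sdiff_subset x (hdeg x) (by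
      intro c hc
      simp only [mem_sdiff, mem_insert, not_or] at hc
      exact hTm x (hx.1 ▸ hW) c hc.1 hc.2.1 hc.2.2)
    rw [card_sdiff_of_subset (insert_subset hUA hT), card_insert_of_notMem hUT] at h1
    have h2 : (B2.filter (fun y => G.Adj y x)).card ≤ dB G f A x := by
      apply card_le_card
      intro y hy
      simp only [B2, B, mem_filter, mem_univ, true_and] at hy ⊢
      exact ⟨hy.2.symm, hy.1.1⟩
    omega
  by_contra hcon
  push Not at hcon
  have e1 : D.card * (q + t) ≤ D.card * (2 * q) := Nat.mul_le_mul_left _ (by omega)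
  have e2 : s * q = S.card * q + D.card * q := by rw [← hSD, add_mul]
  have e3 : D.card * (2 * q) = 2 * (D.card * q) := by ring
  omega

lemma weights (G : SimpleGraph V) (f : V → C) (A T : Finset C) (hT : T ⊆ A) (s : ℕ)
    (hdeg : ∀ v, dg G v < Fintype.card C) (hB : ∀ y, f y ∉ A → ∀ c ∈ A, ¬ Mov G f y c)
    (hcT : ∀ c ∈ T, cnt f c = s)
    (hcB : (univ.filter (fun v => f v ∉ A)).card = s * Aᶜ.card + 1)
    (hqt : Aᶜ.card < T.card) :
    ∃ z y1 y2, f y1 ∉ A ∧ f y2 ∉ A ∧ Solo G f T y1 z ∧ Solo G f T y2 z ∧ y1 ≠ y2 ∧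
      ¬ G.Adj y1 y2 := by
  by_contra hcon
  push Not at hcon
  set q := Aᶜ.card with hq
  set t := T.card with ht
  set B := univ.filter (fun v => f v ∉ A) with hBdef
  let Sz : V → ℕ := fun z => (B.filter (fun y => Solo G f T y z)).card
  let A' := univ.filter (fun v => f v ∈ T)
  have hA' : A'.card = t * s := by
    rw [card_fib f T, sum_congr rfl hcT]; simp [ht]
  have hswap : ∑ y ∈ B, ∑ z ∈ A' with Solo G f T y z, (1 / (Sz z : ℚ)) =
      ∑ z ∈ A', ∑ y ∈ B with Solo G f T y z, (1 / (Sz z : ℚ)) := by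
    simp_rw [sum_filter]
    exact sum_comm
  have hup : ∑ z ∈ A', ∑ y ∈ B with Solo G f T y z, (1 / (Sz z : ℚ)) ≤ t * s := by
    have : ∑ z ∈ A', ∑ y ∈ B with Solo G f T y z, (1 / (Sz z : ℚ)) ≤ ∑ z ∈ A', 1 := by
      apply sum_le_sum
      intro z _
      rw [sum_const, nsmul_eq_mul]
      change (Sz z : ℚ) * (1 / Sz z) ≤ 1
      rw [mul_one_div]
      exact div_self_le_one _
    refine this.trans ?_
    rw [sum_const, hA']; simp
  have hlow : ∀ y ∈ B, (t : ℚ) / q ≤ ∑ z ∈ A' with Solo G f T y z, (1 / (Sz z : ℚ)) := by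
    intro y hy
    simp only [B, mem_filter, mem_univ, true_and] at hy
    have h1 := solo_count G f A T hT y (hdeg y) (hB y hy)
    have h2 := degE G f A A (Subset.refl _) y (hdeg y) (hB y hy)
    set b := dB G f A y with hb
    have h3 : (A'.filter (fun z => Solo G f T y z)) = univ.filter (fun z => Solo G f T y z) := by
      ext z
      simp only [A', mem_filter, mem_univ, true_and]
      exact ⟨fun h => h.2, fun h => ⟨h.2.1, h⟩⟩
    rw [h3]
    set Y := univ.filter (fun z => Solo G f T y z) with hY
    have h4 : ∀ z ∈ Y, (1 : ℚ) / (b + 1) ≤ 1 / (Sz z : ℚ) := by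
      intro z hz
      simp only [Y, mem_filter, mem_univ, true_and] at hz
      have h5 : Sz z ≤ b + 1 := by
        refine (card_le_card (t := insert y (univ.filter (fun w => G.Adj y w ∧ f w ∉ A))) ?_).trans
          (card_insert_le _ _)
        intro w hw
        simp only [B, mem_filter, mem_univ, true_and] at hw
        simp only [mem_insert, mem_filter, mem_univ, true_and]
        by_cases hwy : w = y
        · exact Or.inl hwy
        · exact Or.inr ⟨hcon z y w hy hw.1 hz hw.2 (Ne.symm hwy), hw.1⟩
      have h6 : 0 < Sz z := card_pos.2 ⟨y, by simp [B, hy, hz]⟩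
      apply one_div_le_one_div_of_le
      · exact_mod_cast h6
      · exact_mod_cast h5
    have h5 := card_nsmul_le_sum Y _ _ h4
    refine le_trans ?_ h5
    rw [nsmul_eq_mul, mul_one_div]
    have hq0 : 0 < q := by omega
    rw [div_le_div_iff₀ (by exact_mod_cast hq0) (by positivity)]
    have e1 : (t : ℚ) + 1 + b ≤ q + Y.card := by exact_mod_cast h1
    have e2 : (b : ℚ) + 1 ≤ q := by
      have : b + 1 ≤ q := by omega
      exact_mod_cast this
    have e3 : (q : ℚ) ≤ t := by exact_mod_cast hqt.le
    have e4 : (0 : ℚ) < q := by exact_mod_cast hq0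
    nlinarith [mul_nonneg (sub_nonneg.2 e3) (sub_nonneg.2 e2)]
  have h1 := card_nsmul_le_sum B _ _ hlow
  rw [hswap] at h1
  have h2 := h1.trans hup
  rw [hcB, nsmul_eq_mul] at h2
  have ht0 : (0 : ℚ) < t := by
    have : 0 < t := by omega
    exact_mod_cast this
  by_cases hq0 : q = 0
  · -- every vertex outside the accessible classes has negative slack
    have : 0 < B.card := by omega
    obtain ⟨y, hy⟩ := card_pos.1 this
    simp only [B, mem_filter, mem_univ, true_and] at hy
    have : f y ∈ Aᶜ := by simpa using hy
    have : 0 < q := card_pos.2 ⟨_, this⟩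
    omega
  have e4 : (0 : ℚ) < q := by
    have : 0 < q := by omega
    exact_mod_cast this
  rw [mul_div_assoc', div_le_iff₀ e4] at h2
  push_cast at h2
  nlinarith

end HS

namespace HS
open Finset Relation
open scoped Classical
variable {V C : Type} [Fintype V] [Fintype C]

lemma glue (G : SimpleGraph V) (f g : V → C) (A : Finset C) (s : ℕ) (hf : Proper G f) (y z : V)
    (X : C) (hy : f y ∉ A) (hz : f z ∈ A) (hyz : ∀ w, G.Adj y w → f w = f z → w = z)
    (g1 : ∀ v, f v ∉ A → v ≠ y → g v ∉ A) (g2 : ∀ v, f v ∈ A ∨ v = y → g v = f v)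
    (g3 : ∀ u v, f u ∉ A → u ≠ y → f v ∉ A → v ≠ y → G.Adj u v → g u ≠ g v)
    (g4 : ∀ c, c ∉ A → (univ.filter (fun v => (f v ∉ A ∧ v ≠ y) ∧ g v = c)).card = s)
    (hXW : X ≠ f z) (hX : ∀ w, G.Adj z w → w ≠ y → g w ≠ X) :
    ∃ h : V → C, Proper G h ∧ h z = X ∧ h y = f z ∧ (∀ v, v ≠ z → v ≠ y → h v = g v) ∧
      ∀ c, cnt h c = (if c ∈ A then cnt f c else s) + (if c = X then 1 else 0) := by
  have hzy : z ≠ y := by rintro rfl; exact hy hz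
  have hgz : g z = f z := g2 z (Or.inl hz)
  have hgy : g y = f y := g2 y (Or.inr rfl)
  refine ⟨Function.update (Function.update g z X) y (f z), ?_, ?_, ?_, ?_, ?_⟩
  · have key : ∀ u v, G.Adj u v → v ≠ y → v ≠ z →
        Function.update (Function.update g z X) y (f z) u ≠ g v := by
      intro u v huv hvy hvz
      by_cases huy : u = y
      · subst huy
        simp only [Function.update_self]
        intro h
        by_cases hv : f v ∈ A
        · exact hvz (hyz v huv ((g2 v (Or.inl hv)).symm.trans h.symm))
        · exact g1 v hv hvy (h ▸ hz)
      · rw [Function.update_of_ne huy]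
        by_cases huz : u = z
        · subst huz
          simp only [Function.update_self]
          exact (hX v huv hvy).symm
        · rw [Function.update_of_ne huz]
          by_cases hu : f u ∈ A <;> by_cases hv : f v ∈ A
          · rw [g2 u (Or.inl hu), g2 v (Or.inl hv)]; exact hf u v huv
          · rw [g2 u (Or.inl hu)]; intro h; exact g1 v hv hvy (h ▸ hu)
          · rw [g2 v (Or.inl hv)]; intro h; exact g1 u hu huy (h ▸ hv)
          · exact g3 u v hu huy hv hvy huv
    intro u v huv
    by_cases hv : v = y ∨ v = z
    · by_cases hu : u = y ∨ u = z
      · have huv' := huv.ne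
        rcases hv with rfl | rfl <;> rcases hu with rfl | rfl
        · exact absurd rfl huv'
        · simpa [hzy, Function.update_of_ne] using hXW
        · simpa [hzy, Function.update_of_ne] using hXW.symm
        · exact absurd rfl huv'
      · push Not at hu
        have := key v u huv.symm hu.1 hu.2
        rw [Function.update_of_ne hu.1, Function.update_of_ne hu.2]
        exact this.symm
    · push Not at hv
      have := key u v huv hv.1 hv.2
      rwa [Function.update_of_ne hv.1, Function.update_of_ne hv.2]
  · rw [Function.update_of_ne hzy]; simp
  · simp
  · intro v h1 h2; rw [Function.update_of_ne h2, Function.update_of_ne h1]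
  · intro c
    have e1 := cnt_update g z X c
    have e2 := cnt_update (Function.update g z X) y (f z) c
    rw [Function.update_of_ne hzy.symm, hgy] at e2
    rw [hgz] at e1
    by_cases hc : c ∈ A
    · have h1 : c ≠ f y := by rintro rfl; exact hy hc
      have h2 : cnt g c = cnt f c := by
        unfold cnt
        congr 1
        apply filter_congr
        intro v _
        by_cases hv : f v ∈ A
        · rw [g2 v (Or.inl hv)]
        · by_cases hvy : v = y
          · rw [hvy, hgy]
          · have := g1 v hv hvy
            constructor
            · rintro rfl; exact absurd hc this
            · rintro rfl; exact absurd hc hv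
      simp only [if_neg h1, if_pos hc] at *
      omega
    · have h2 : cnt g c = s + (if c = f y then 1 else 0) := by
        rw [← g4 c hc]
        have : univ.filter (fun v => g v = c) =
            univ.filter (fun v => (f v ∉ A ∧ v ≠ y) ∧ g v = c) ∪
            univ.filter (fun v => v = y ∧ c = f y) := by
          ext v
          simp only [mem_union, mem_filter, mem_univ, true_and]
          by_cases hvy : v = y
          · subst hvy
            simp [hgy, eq_comm]
          · by_cases hv : f v ∈ A
            · simp only [hvy, hv, g2 v (Or.inl hv)]
              simp
              rintro rfl; exact hc hv
            · simp [hvy, hv]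
        unfold cnt
        rw [this, card_union_of_disjoint]
        · congr 1
          split_ifs with h
          · rw [card_eq_one]
            exact ⟨y, by ext v; simp [h]⟩
          · simp [h]
        · rw [disjoint_left]
          intro v h1 h2
          simp only [mem_filter, mem_univ, true_and] at h1 h2
          exact h1.1.2 h2.1
      simp only [if_neg hc]
      omega

lemma step (k : ℕ) (IH : ∀ k' < k, HSk k') (G : SimpleGraph V) (s : ℕ)
    (hC : Fintype.card C = k) (hdeg : ∀ v, dg G v < k) :
    ∀ (N : ℕ) (f : V → C) (v0 vp : C), Proper G f → v0 ≠ vp →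
    (∀ c, cnt f c + (if c = v0 then 1 else 0) = s + (if c = vp then 1 else 0)) →
    (univ.filter (fun c => ¬ ReflTransGen (R G f) c v0)).card < N →
    ∃ f' : V → C, Proper G f' ∧ ∀ c, cnt f' c = s := by
  intro N
  induction N with
  | zero => intro f v0 vp _ _ _ h; omega
  | succ N ih =>
  intro f v0 vp hf hne hcnt hN
  by_cases hacc : ReflTransGen (R G f) vp v0
  · obtain ⟨f', h1, _, _, _, h2⟩ := shift G f hf v0 _ (fun _ => True) vp (Nat.lt_succ_self _)
      (ReflTransGen.mono (fun a b h => ⟨h, trivial, trivial⟩) _ _ hacc)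
    refine ⟨f', h1, fun c => ?_⟩
    have := h2 c
    have := hcnt c
    omega
  let A := univ.filter (fun c => ReflTransGen (R G f) c v0)
  have memA : ∀ c, c ∈ A ↔ ReflTransGen (R G f) c v0 := by intro c; simp [A]
  have hv0A : v0 ∈ A := (memA _).2 .refl
  have hvpA : vp ∉ A := fun h => hacc ((memA _).1 h)
  have hAc : univ.filter (fun c => ¬ ReflTransGen (R G f) c v0) = Aᶜ := by
    ext c; simp [A]
  rw [hAc] at hN
  have hdeg' : ∀ v, dg G v < Fintype.card C := by rw [hC]; exact hdeg
  have hB : ∀ y, f y ∉ A → ∀ c ∈ A, ¬ Mov G f y c := by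
    intro y hy c hc hm
    exact hy ((memA _).2 (.head ⟨y, rfl, hm⟩ ((memA _).1 hc)))
  have hcA : ∀ c ∈ A, cnt f c + (if c = v0 then 1 else 0) = s := by
    intro c hc
    have h1 := hcnt c
    rwa [if_neg (show c ≠ vp by rintro rfl; exact hvpA hc), add_zero] at h1
  have hcB : (univ.filter (fun v => f v ∉ A)).card = s * Aᶜ.card + 1 := by
    have h1 := card_fib f Aᶜ
    have h2 : ∑ c ∈ Aᶜ, cnt f c = ∑ c ∈ Aᶜ, (s + if c = vp then 1 else 0) := by
      apply sum_congr rfl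
      intro c hc
      have h1 := hcnt c
      rwa [if_neg (show c ≠ v0 by rintro rfl; simp [hv0A] at hc), add_zero] at h1
    rw [h2, sum_add_distrib] at h1
    simp [hvpA] at h1
    rw [h1, mul_comm]
  have hAk : A.card + Aᶜ.card = k := by rw [card_add_card_compl, hC]
  have hApos : 0 < A.card := card_pos.2 ⟨v0, hv0A⟩
  have hne : ∃ c, c ≠ v0 ∧ ReflTransGen (R G f) c v0 := by
    by_contra hcon
    push Not at hcon
    have hA1 : A = {v0} := by
      ext c
      rw [memA, mem_singleton]
      constructor
      · intro h; by_contra h'; exact hcon c h' h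
      · rintro rfl; exact .refl
    have h1 : univ.filter (fun v => f v ∉ A) ⊆
        (univ.filter (fun v => f v = v0)).biUnion (fun v => univ.filter (fun w => G.Adj v w)) := by
      intro y hy
      simp only [mem_filter, mem_univ, true_and] at hy
      have := hB y hy v0 hv0A
      unfold Mov at this
      push Not at this
      obtain ⟨w, hw, hw2⟩ := this
      simp only [mem_biUnion, mem_filter, mem_univ, true_and]
      exact ⟨w, hw2, hw.symm⟩
    have h2 := (card_le_card h1).trans (card_biUnion_le_card_mul _ _ (k - 1) (by
      intro v _
      have := hdeg v
      unfold dg at this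
      omega))
    have h3 := hcA v0 hv0A
    rw [if_pos rfl] at h3
    unfold cnt at h3
    have h4 : Aᶜ.card = k - 1 := by
      rw [hA1, card_singleton] at hAk
      rw [hA1]; omega
    rw [hcB, h4] at h2
    have h5 : (univ.filter (fun v => f v = v0)).card * (k - 1) ≤ s * (k - 1) :=
      Nat.mul_le_mul_right _ (by omega)
    omega
  obtain ⟨U, T, hTne, hUT, hUr, hT⟩ := digraph (R G f) v0 hne
  have hTA : T ⊆ A := fun W hW => (memA _).2 (hT W hW).2.1
  have hUA : U ∈ A := (memA _).2 hUr
  have hcT : ∀ c ∈ T, cnt f c = s := by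
    intro c hc
    have := hcA c (hTA hc)
    rwa [if_neg (hT c hc).1, add_zero] at this
  -- recolouring of the inaccessible part minus one vertex
  have hrec : ∀ (f1 : V → C) (y : V), f y ∉ A → (∀ v, f v ∉ A → f1 v = f v) →
      ∃ g : V → C, (∀ v, f v ∉ A → v ≠ y → g v ∉ A) ∧ (∀ v, f v ∈ A ∨ v = y → g v = f1 v) ∧
      (∀ u v, f u ∉ A → u ≠ y → f v ∉ A → v ≠ y → G.Adj u v → g u ≠ g v) ∧
      (∀ c, c ∉ A → (univ.filter (fun v => (f v ∉ A ∧ v ≠ y) ∧ g v = c)).card = s) := by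
    intro f1 y hy hf1
    obtain ⟨g, p1, p2, p3, p4⟩ := recolor k IH G s ((univ.filter (fun v => f v ∉ A)).erase y) Aᶜ
      (by omega) (by rw [card_erase_of_mem (by simpa using hy), hcB]; simp) (by
        intro v hv
        simp only [mem_erase, mem_filter, mem_univ, true_and] at hv
        have h1 := degE G f A A (Subset.refl _) v (hdeg' v) (hB v hv.2)
        have h2 : (((univ.filter (fun v => f v ∉ A)).erase y).filter
            (fun w => G.Adj v w)).card ≤ dB G f A v := by
          apply card_le_card
          intro w hw
          simp only [mem_filter, mem_erase, mem_univ, true_and] at hw ⊢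
          exact ⟨hw.2, hw.1.2⟩
        omega) f1
    have mem : ∀ v, v ∈ (univ.filter (fun v => f v ∉ A)).erase y ↔ f v ∉ A ∧ v ≠ y := by
      intro v; simp [and_comm]
    refine ⟨g, ?_, ?_, ?_, ?_⟩
    · intro v h1 h2
      simpa using p1 v ((mem v).2 ⟨h1, h2⟩)
    · intro v h
      refine p2 v ?_
      rw [mem]; tauto
    · intro u v h1 h2 h3 h4
      exact p3 u ((mem u).2 ⟨h1, h2⟩) v ((mem v).2 ⟨h3, h4⟩)
    · intro c hc
      rw [← p4 c (by simpa using hc)]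
      congr 1
      ext v
      simp only [mem_filter, mem, mem_univ, true_and]
  by_cases hcase : ∃ z y, f z ∈ T ∧ f y ∉ A ∧ Solo G f T y z ∧ ∃ X ∈ A, X ≠ f z ∧ Mov G f z X
  · obtain ⟨z, y, hz, hy, hyz, X, hXA, hXz, hm⟩ := hcase
    have hreach := (hT _ hz).2.2.2 X ((memA _).1 hXA) hXz
    obtain ⟨f1, p1, p2, p3, p4, p5⟩ := shift G f hf v0 _ _ X (Nat.lt_succ_self _) hreach
    have f1B : ∀ v, f v ∉ A → f1 v = f v := fun v hv => p2 v (fun h => hv ((memA _).2 h.1))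
    have f1W : ∀ v, f1 v = f z ↔ f v = f z := by
      intro v
      constructor
      · intro h
        by_contra h'
        by_cases hq : f v ∈ A
        · exact (p3 v ⟨(memA _).1 hq, h'⟩).2 h
        · exact h' ((f1B v hq).symm.trans h)
      · intro h
        rw [p2 v (fun h' => h'.2 h), h]
    have f1A : ∀ v, f1 v ∈ A ↔ f v ∈ A := by
      intro v
      by_cases hq : f v ∈ A
      · refine iff_of_true ?_ hq
        by_cases h : f v = f z
        · rw [(f1W v).2 h]; exact hTA hz
        · exact (memA _).2 (p3 v ⟨(memA _).1 hq, h⟩).1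
      · rw [f1B v hq]
    have f1z : f1 z = f z := (f1W z).2 rfl
    obtain ⟨g, g1, g2, g3, g4⟩ := hrec f1 y hy f1B
    obtain ⟨h, h1, _, _, _, h5⟩ := glue G f1 g A s p1 y z X (by rwa [f1A])
      (by rw [f1A]; exact hTA hz)
      (by intro w hw hw2; rw [f1z, f1W] at hw2; exact hyz.2.2 w hw hw2)
      (by simpa only [f1A] using g1) (by simpa only [f1A] using g2)
      (by simpa only [f1A] using g3) (by simpa only [f1A] using g4)
      (by rwa [f1z]) (by
        intro w hw hwy hgX
        by_cases hwA : f w ∈ A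
        · rw [g2 w (Or.inl hwA)] at hgX
          exact hm w hw (p4 w hgX)
        · exact g1 w hwA hwy (hgX ▸ hXA))
    refine ⟨h, h1, fun c => ?_⟩
    rw [h5 c]
    by_cases hc : c ∈ A
    · rw [if_pos hc]
      have e1 := p5 c
      have e2 := hcA c hc
      omega
    · rw [if_neg hc, if_neg (by rintro rfl; exact hc hXA), add_zero]
  · push Not at hcase
    have hqt : Aᶜ.card < T.card := by
      obtain ⟨W, hW⟩ := hTne
      refine lemma_two G f A T hTA U W s hUA hUT hW hdeg' hB ?_ ?_ (hcT W hW) hcB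
      · intro x hx c hc hcU hcT hm
        rcases (hT _ hx).2.2.1 c ((memA _).1 hc) ⟨x, rfl, hm⟩ with h | h
        · exact hcU h
        · exact hcT h
      · intro z y hz hy hyz X hX hXW
        exact hcase z y (hz ▸ hW) hy hyz X hX (hz ▸ hXW)
    obtain ⟨z, y1, y2, hy1, hy2, hs1, hs2, hy12, hnadj⟩ :=
      weights G f A T hTA s hdeg' hB hcT hcB hqt
    have hzT := hs1.2.1
    have hzA := hTA hzT
    have hzm := hcase z y1 hzT hy1 hs1
    obtain ⟨g, g1, g2, g3, g4⟩ := hrec f y1 hy1 (fun _ _ => rfl)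
    have hY : ∃ Y ∈ Aᶜ, ∀ w, G.Adj z w → w ≠ y1 → g w ≠ Y := by
      have h1 := degE G f A (A.erase (f z)) (erase_subset _ _) z (hdeg' z) (by
        intro c hc
        rw [mem_erase] at hc
        exact hzm c hc.2 hc.1)
      rw [card_erase_of_mem hzA] at h1
      set M := univ.filter (fun w => G.Adj z w ∧ f w ∉ A) with hM
      have h1' : M.card + (A.card - 1) < A.card + Aᶜ.card := h1
      have hy1M : y1 ∈ M := by simp [M, hy1, hs1.1.symm]
      have h2 : ((M.erase y1).image g).card < Aᶜ.card := by
        refine lt_of_le_of_lt card_image_le ?_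
        rw [card_erase_of_mem hy1M]
        have : 0 < M.card := card_pos.2 ⟨_, hy1M⟩
        omega
      obtain ⟨Y, hY1, hY2⟩ := exists_mem_notMem_of_card_lt_card h2
      refine ⟨Y, hY1, ?_⟩
      intro w hw hwy hgY
      by_cases hwA : f w ∈ A
      · rw [g2 w (Or.inl hwA)] at hgY
        rw [hgY] at hwA
        simp [hwA] at hY1
      · apply hY2
        rw [mem_image]
        exact ⟨w, by simp [M, hwy, hw, hwA], hgY⟩
    obtain ⟨Y, hYA, hYm⟩ := hY
    have hYA' : Y ∉ A := by simpa using hYA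
    obtain ⟨h, h1, h2, h3, h4, h5⟩ := glue G f g A s hf y1 z Y hy1 hzA hs1.2.2 g1 g2 g3 g4
      (by rintro rfl; exact hYA' hzA) hYm
    refine ih h v0 Y h1 (by rintro rfl; exact hYA' hv0A) ?_ ?_
    · intro c
      rw [h5 c]
      by_cases hc : c ∈ A
      · rw [if_pos hc, if_neg (by rintro rfl; exact hYA' hc)]
        have := hcA c hc
        omega
      · rw [if_neg hc, if_neg (show c ≠ v0 by rintro rfl; exact hc hv0A), add_zero]
    · have hW := hT _ hzT
      -- classes other than that of `z` are unchanged
      have hsame : ∀ c ∈ A, c ≠ f z → ∀ v, h v = c ↔ f v = c := by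
        intro c hc hcz v
        by_cases hvz : v = z
        · subst hvz
          rw [h2]
          exact iff_of_false (by rintro rfl; exact hYA' hc) hcz.symm
        · by_cases hvy : v = y1
          · subst hvy
            rw [h3]
            exact iff_of_false hcz.symm (by rintro rfl; exact hy1 hc)
          · rw [h4 v hvz hvy]
            by_cases hvA : f v ∈ A
            · rw [g2 v (Or.inl hvA)]
            · exact iff_of_false (by rintro rfl; exact g1 v hvA hvy hc)
                (by rintro rfl; exact hvA hc)
      have hR : ∀ a b, a ∈ A → b ∈ A → a ≠ f z → b ≠ f z → R G f a b → R G h a b := by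
        rintro a b ha hb haz hbz ⟨y, hy, hm⟩
        refine ⟨y, (hsame a ha haz y).2 hy, ?_⟩
        intro w hw hw2
        exact hm w hw ((hsame b hb hbz w).1 hw2)
      have hreach : ∀ X ∈ A, X ≠ f z → ReflTransGen (R G h) X v0 := by
        intro X hX hXz
        refine ReflTransGen.mono ?_ _ _ (hW.2.2.2 X ((memA _).1 hX) hXz)
        intro a b hab
        exact hR a b ((memA _).2 hab.2.1.1) ((memA _).2 hab.2.2.1) hab.2.1.2 hab.2.2.2 hab.1
      have hreachW : ReflTransGen (R G h) (f z) v0 := by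
        have hh : ReflTransGen (Rst (R G f) (fun _ => True)) (f z) v0 :=
          ReflTransGen.mono (fun a b h => ⟨h, trivial, trivial⟩) _ _ hW.2.1
        obtain ⟨_, X, ⟨w, hw, hm⟩, _, hXz, hX⟩ := first _ _ _ _ hW.1 hh
        have hXA : X ∈ A := (memA _).2 (ReflTransGen.mono (fun a b h => h.1) _ _ hX)
        have hwz : w ≠ z := by rintro rfl; exact hzm X hXA hXz hm
        have hwA : f w ∈ A := hw ▸ hzA
        have hwy : w ≠ y1 := by rintro rfl; exact hy1 hwA
        refine .head ⟨w, ?_, ?_⟩ (hreach X hXA hXz)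
        · rw [h4 w hwz hwy, g2 w (Or.inl hwA), hw]
        · intro u hu hu2
          exact hm u hu ((hsame X hXA hXz u).1 hu2)
      have hy2z : y2 ≠ z := by rintro rfl; exact hy2 hzA
      have hhy2 : h y2 ∉ A := by
        rw [h4 y2 hy2z hy12.symm]; exact g1 y2 hy2 hy12.symm
      have hreach2 : ReflTransGen (R G h) (h y2) v0 := by
        refine .head ⟨y2, rfl, ?_⟩ hreachW
        intro w hw hw2
        by_cases hwz : w = z
        · subst hwz
          rw [h2] at hw2
          exact hYA' (hw2 ▸ hzA)
        · by_cases hwy : w = y1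
          · subst hwy; exact hnadj hw.symm
          · rw [h4 w hwz hwy] at hw2
            by_cases hwA : f w ∈ A
            · rw [g2 w (Or.inl hwA)] at hw2
              exact hwz (hs2.2.2 w hw hw2)
            · exact g1 w hwA hwy (hw2 ▸ hzA)
      have hlt : (univ.filter (fun c => ¬ ReflTransGen (R G h) c v0)).card < Aᶜ.card := by
        apply card_lt_card
        refine (ssubset_iff_of_subset ?_).2 ⟨h y2, by simpa using hhy2, by simpa using hreach2⟩
        intro c hc
        simp only [mem_filter, mem_univ, true_and] at hc
        rw [mem_compl]
        intro hcA'
        by_cases hcz : c = f z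
        · exact hc (hcz ▸ hreachW)
        · exact hc (hreach c hcA' hcz)
      omega

theorem hajnal_szemeredi (k : ℕ) : HSk k := by
  induction k using Nat.strong_induction_on with
  | _ k IH =>
  intro V C _ _ G s hC hV hdeg
  let H : Finset V → SimpleGraph V := fun Z =>
    { Adj := fun u v => G.Adj u v ∧ u ∈ Z ∧ v ∈ Z
      symm := ⟨fun u v h => ⟨h.1.symm, h.2.2, h.2.1⟩⟩
      loopless := ⟨fun u h => G.loopless.1 u h.1⟩ }
  have hHdeg : ∀ Z v, dg (H Z) v < k := by
    intro Z v
    refine lt_of_le_of_lt (card_le_card ?_) (hdeg v)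
    intro w hw
    simp only [mem_filter, mem_univ, true_and] at hw ⊢
    exact hw.1
  have key : ∀ Z : Finset V, ∃ f : V → C, Proper (H Z) f ∧ ∀ c, cnt f c = s := by
    intro Z
    induction Z using Finset.induction_on with
    | empty =>
      have e : V ≃ C × Fin s := Fintype.equivOfCardEq (by simp [hV, hC, mul_comm])
      refine ⟨fun v => (e v).1, ?_, ?_⟩
      · intro u v h; exact absurd h.2.1 (notMem_empty _)
      · intro c
        unfold cnt
        have : (univ : Finset (Fin s)).card = s := by simp
        refine Eq.trans ?_ this
        apply card_bij (fun v _ => (e v).2)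
        · simp
        · intro a ha b hb h
          simp only [mem_filter, mem_univ, true_and] at ha hb
          exact e.injective (Prod.ext (ha.trans hb.symm) h)
        · intro i _
          exact ⟨e.symm (c, i), by simp, by simp⟩
    | insert u Z hu ih =>
      obtain ⟨f, hf, hfc⟩ := ih
      have hfZ : ∀ a b, (H (insert u Z)).Adj a b → a ≠ u → b ≠ u → f a ≠ f b := by
        intro a b hab ha hb
        exact hf a b ⟨hab.1, mem_of_mem_insert_of_ne hab.2.1 ha,
          mem_of_mem_insert_of_ne hab.2.2 hb⟩
      by_cases hm : Mov (H (insert u Z)) f u (f u)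
      · refine ⟨f, ?_, hfc⟩
        intro a b hab
        by_cases ha : a = u
        · subst ha; exact (hm b hab).symm
        · by_cases hb : b = u
          · subst hb; exact hm a hab.symm
          · exact hfZ a b hab ha hb
      · have hex : ∃ c, Mov (H (insert u Z)) f u c := by
          by_contra hcon
          push Not at hcon
          have h1 := hHdeg (insert u Z) u
          rw [dg_eq (H (insert u Z)) f u] at h1
          have h2 : ∑ c : C, 1 ≤ ∑ c, nb (H (insert u Z)) f u c :=
            sum_le_sum (fun c _ => nb_pos _ _ _ _ (hcon c))
          simp [hC] at h2
          omega
        obtain ⟨c, hc⟩ := hex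
        have hcu : f u ≠ c := by rintro rfl; exact hm hc
        refine step k IH (H (insert u Z)) s hC (hHdeg _) _ (Function.update f u c) (f u) c
          ?_ hcu ?_ (Nat.lt_succ_self _)
        · intro a b hab
          by_cases ha : a = u
          · subst ha
            rw [Function.update_self, Function.update_of_ne hab.ne']
            exact (hc b hab).symm
          · by_cases hb : b = u
            · subst hb
              rw [Function.update_self, Function.update_of_ne hab.ne]
              exact hc a hab.symm
            · rw [Function.update_of_ne ha, Function.update_of_ne hb]
              exact hfZ a b hab ha hb
        · intro d
          rw [cnt_update, hfc]
  obtain ⟨f, hf, hfc⟩ := key univ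
  exact ⟨f, fun a b hab => hf a b ⟨hab, mem_univ _, mem_univ _⟩, hfc⟩

end HS

namespace HS
open Finset
open scoped Classical
variable {V : Type} [Fintype V]

noncomputable def dX (G : SimpleGraph V) (X : Finset V) (v : V) : ℕ :=
  (X.filter (fun w => G.Adj v w)).card

lemma hs_packing (G : SimpleGraph V) (r m : ℕ) (X : Finset V) (hX : X.card = (r + 1) * m)
    (hd : ∀ v ∈ X, r * m ≤ dX G X v) :
    ∃ P : Finset (Finset V), (∀ p ∈ P, p.card = r + 1 ∧ G.IsClique (p : Set V)) ∧
      (P : Set (Finset V)).PairwiseDisjoint id ∧ P.biUnion id = X := by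
  let H : SimpleGraph {v // v ∈ X} := (Gᶜ).comap Subtype.val
  obtain ⟨f, hf, hfc⟩ := hajnal_szemeredi m {v // v ∈ X} (Fin m) H (r + 1) (by simp)
    (by simpa using hX) (by
      intro v
      have h1 : dg H v ≤ ((X.filter (fun w => ¬ G.Adj v.1 w)).erase v.1).card := by
        unfold dg
        apply card_le_card_of_injOn Subtype.val
        · intro w hw
          simp only [coe_filter, mem_univ, true_and, Set.mem_ofPred_eq] at hw
          have hw' : v.1 ≠ w.1 ∧ ¬ G.Adj v.1 w.1 := hw
          simp only [coe_erase, coe_filter, Set.mem_sdiff, Set.mem_ofPred_eq, Set.mem_singleton_iff]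
          exact ⟨⟨w.2, hw'.2⟩, hw'.1.symm⟩
        · intro a _ b _ h; exact Subtype.ext h
      have hmem : v.1 ∈ X.filter (fun w => ¬ G.Adj v.1 w) := by simp [v.2]
      rw [card_erase_of_mem hmem] at h1
      have h0 := card_pos.2 ⟨_, hmem⟩
      have h2 := card_filter_add_card_filter_not (s := X) (fun w => G.Adj v.1 w)
      have h3 := hd v.1 v.2
      unfold dX at h3
      rw [hX, add_mul] at h2
      omega)
  let F : Fin m → Finset V := fun c => X.filter (fun v => ∃ h : v ∈ X, f ⟨v, h⟩ = c)
  have memF : ∀ c v, v ∈ F c ↔ ∃ h : v ∈ X, f ⟨v, h⟩ = c := by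
    intro c v
    simp only [F, mem_filter]
    exact ⟨fun h => h.2, fun h => ⟨h.1, h⟩⟩
  refine ⟨univ.image F, ?_, ?_, ?_⟩
  · intro p hp
    simp only [mem_image, mem_univ, true_and] at hp
    obtain ⟨c, rfl⟩ := hp
    constructor
    · rw [← hfc c]
      unfold cnt
      symm
      apply card_bij (fun v _ => v.1)
      · intro v hv
        simp only [mem_filter, mem_univ, true_and] at hv
        exact (memF _ _).2 ⟨v.2, hv⟩
      · intro a _ b _ h; exact Subtype.ext h
      · intro v hv
        obtain ⟨h1, h2⟩ := (memF _ _).1 hv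
        exact ⟨⟨v, h1⟩, by simpa using h2, rfl⟩
    · intro u hu v hv huv
      obtain ⟨hu1, hu2⟩ := (memF _ _).1 (mem_coe.1 hu)
      obtain ⟨hv1, hv2⟩ := (memF _ _).1 (mem_coe.1 hv)
      by_contra hcon
      have : H.Adj ⟨u, hu1⟩ ⟨v, hv1⟩ := ⟨huv, hcon⟩
      exact hf _ _ this (hu2.trans hv2.symm)
  · intro p hp q hq hpq
    simp only [coe_image, coe_univ, Set.image_univ, Set.mem_range] at hp hq
    obtain ⟨c, rfl⟩ := hp
    obtain ⟨c', rfl⟩ := hq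
    change Disjoint (F c) (F c')
    rw [disjoint_left]
    intro v h1 h2
    obtain ⟨_, h1⟩ := (memF _ _).1 h1
    obtain ⟨_, h2⟩ := (memF _ _).1 h2
    exact hpq (by rw [← h1, ← h2])
  · ext v
    simp only [mem_biUnion, mem_image, mem_univ, true_and, id]
    constructor
    · rintro ⟨_, ⟨c, rfl⟩, h⟩
      exact ((memF _ _).1 h).1
    · intro h
      exact ⟨_, ⟨f ⟨v, h⟩, rfl⟩, (memF _ _).2 ⟨h, rfl⟩⟩

/-- The smallest-degree vertex lies in a copy of `K_r`. -/
lemma exists_clique (G : SimpleGraph V) (r m : ℕ) (X : Finset V) (hX : X.card = (r + 2) * m)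
    (x : V) (hx : x ∈ X) (hxd : r * m + 1 ≤ dX G X x)
    (hsm : (X.filter (fun v => dX G X v < (r + 1) * m)).card ≤ m) :
    ∃ T ⊆ X, x ∈ T ∧ T.card = r + 2 ∧ G.IsClique (T : Set V) := by
  have hCN : ∀ K ⊆ X, (∀ y ∈ K, (r + 1) * m ≤ dX G X y) →
      r * m + 1 ≤ (X.filter (fun w => G.Adj x w ∧ ∀ y ∈ K, G.Adj y w)).card + K.card * m := by
    intro K hK hbig
    refine hxd.trans ?_
    have : X.filter (fun w => G.Adj x w) ⊆
        X.filter (fun w => G.Adj x w ∧ ∀ y ∈ K, G.Adj y w) ∪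
          K.biUnion (fun y => X.filter (fun w => ¬ G.Adj y w)) := by
      intro w hw
      simp only [mem_union, mem_filter, mem_biUnion] at hw ⊢
      by_cases h : ∀ y ∈ K, G.Adj y w
      · exact Or.inl ⟨hw.1, hw.2, h⟩
      · push Not at h
        obtain ⟨y, hy, h⟩ := h
        exact Or.inr ⟨y, hy, hw.1, h⟩
    refine (card_le_card this).trans ((card_union_le _ _).trans ?_)
    apply Nat.add_le_add_left
    apply card_biUnion_le_card_mul
    intro y hy
    have h1 := card_filter_add_card_filter_not (s := X) (fun w => G.Adj y w)
    have h2 := hbig y hy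
    unfold dX at h2
    have : (r + 2) * m = (r + 1) * m + m := by ring
    omega
  have hK : ∀ t ≤ r, ∃ K ⊆ X, K.card = t ∧ G.IsClique (K : Set V) ∧ (∀ y ∈ K, G.Adj x y) ∧
      ∀ y ∈ K, (r + 1) * m ≤ dX G X y := by
    intro t
    induction t with
    | zero => intro _; exact ⟨∅, by simp⟩
    | succ t ih =>
      intro ht
      obtain ⟨K, k1, k2, k3, k4, k5⟩ := ih (by omega)
      have h1 := hCN K k1 k5
      have h2 : (X.filter (fun v => dX G X v < (r + 1) * m)).card <
          (X.filter (fun w => G.Adj x w ∧ ∀ y ∈ K, G.Adj y w)).card := by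
        rw [k2] at h1
        have : (t + 1) * m ≤ r * m := Nat.mul_le_mul_right _ ht
        rw [add_mul] at this
        omega
      obtain ⟨w, hw, hw2⟩ := exists_mem_notMem_of_card_lt_card h2
      simp only [mem_filter] at hw hw2
      have hwK : w ∉ K := fun h => G.irrefl (hw.2.2 w h)
      refine ⟨insert w K, insert_subset hw.1 k1, by rw [card_insert_of_notMem hwK, k2], ?_, ?_, ?_⟩
      · rw [coe_insert, SimpleGraph.isClique_insert]
        exact ⟨k3, fun y hy _ => (hw.2.2 y hy).symm⟩
      · intro y hy
        rcases mem_insert.1 hy with rfl | hy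
        · exact hw.2.1
        · exact k4 y hy
      · intro y hy
        rcases mem_insert.1 hy with rfl | hy
        · by_contra h
          exact hw2 ⟨hw.1, by omega⟩
        · exact k5 y hy
  obtain ⟨K, k1, k2, k3, k4, k5⟩ := hK r le_rfl
  have h1 := hCN K k1 k5
  rw [k2] at h1
  obtain ⟨w, hw⟩ := card_pos.1
    (show 0 < (X.filter (fun w => G.Adj x w ∧ ∀ y ∈ K, G.Adj y w)).card by omega)
  simp only [mem_filter] at hw
  have hwK : w ∉ K := fun h => G.irrefl (hw.2.2 w h)
  have hxK : x ∉ insert w K := by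
    intro h
    rcases mem_insert.1 h with h | h
    · exact G.irrefl (h ▸ hw.2.1)
    · exact G.irrefl (k4 x h)
  refine ⟨insert x (insert w K), insert_subset hx (insert_subset hw.1 k1), mem_insert_self _ _,
    by rw [card_insert_of_notMem hxK, card_insert_of_notMem hwK, k2], ?_⟩
  rw [coe_insert, SimpleGraph.isClique_insert, coe_insert, SimpleGraph.isClique_insert]
  refine ⟨⟨k3, fun y hy _ => (hw.2.2 y hy).symm⟩, ?_⟩
  intro y hy _
  rcases hy with rfl | hy
  · exact hw.2.1
  · exact k4 y hy

lemma main (G : SimpleGraph V) (r : ℕ) : ∀ (m : ℕ) (X : Finset V), X.card = (r + 2) * m →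
    (∀ i, 1 ≤ i → i < m → (X.filter (fun v => dX G X v < r * m + i)).card < i) →
    (X.filter (fun v => dX G X v < (r + 1) * m)).card ≤ m →
    (∀ x ∈ X, dX G X x < (r + 1) * m → ∀ t ⊆ X, G.IsNClique (r + 3) t → x ∉ t) →
    ∃ P : Finset (Finset V), (∀ p ∈ P, p.card = r + 2 ∧ G.IsClique (p : Set V)) ∧
      (P : Set (Finset V)).PairwiseDisjoint id ∧ P.biUnion id = X := by
  intro m
  induction m with
  | zero =>
    intro X hX _ _ _
    refine ⟨∅, by simp, by simp, ?_⟩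
    have : X = ∅ := card_eq_zero.1 (by simpa using hX)
    simp [this]
  | succ m ih =>
    intro X hX h1 h2 h3
    by_cases hall : ∀ v ∈ X, (r + 1) * (m + 1) ≤ dX G X v
    · exact hs_packing G (r + 1) (m + 1) X hX hall
    push Not at hall
    obtain ⟨x0, hx0, hx0d⟩ := hall
    obtain ⟨x, hx, hmin⟩ := exists_min_image X (dX G X) ⟨x0, hx0⟩
    have hxd : dX G X x < (r + 1) * (m + 1) := lt_of_le_of_lt (hmin x0 hx0) hx0d
    have hm : 1 ≤ m := by
      by_contra hm
      have hm0 : m = 0 := by omega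
      subst hm0
      simp only [zero_add, mul_one] at *
      have hex : ∃ v ∈ X, v ≠ x ∧ ¬ G.Adj x v := by
        by_contra hcon
        push Not at hcon
        have : X.erase x ⊆ X.filter (fun w => G.Adj x w) := by
          intro w hw
          rw [mem_erase] at hw
          exact mem_filter.2 ⟨hw.2, hcon w hw.2 hw.1⟩
        have := card_le_card this
        rw [card_erase_of_mem hx, hX] at this
        unfold dX at hxd
        omega
      obtain ⟨v, hv, hvx, hnadj⟩ := hex
      have hvd : dX G X v < r + 1 := by
        have : X.filter (fun w => G.Adj v w) ⊆ (X.erase x).erase v := by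
          intro w hw
          rw [mem_filter] at hw
          rw [mem_erase, mem_erase]
          refine ⟨hw.2.ne', ?_, hw.1⟩
          rintro rfl
          exact hnadj hw.2.symm
        have := card_le_card this
        rw [card_erase_of_mem (mem_erase.2 ⟨hvx, hv⟩), card_erase_of_mem hx, hX] at this
        unfold dX
        omega
      have : 1 < (X.filter (fun v => dX G X v < r + 1)).card :=
        one_lt_card.2 ⟨v, mem_filter.2 ⟨hv, hvd⟩, x, mem_filter.2 ⟨hx, hxd⟩, hvx⟩
      omega
    have hxlow : r * (m + 1) + 1 ≤ dX G X x := by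
      by_contra h
      have h4 := h1 1 le_rfl (by omega)
      have : 0 < (X.filter (fun v => dX G X v < r * (m + 1) + 1)).card :=
        card_pos.2 ⟨x, mem_filter.2 ⟨hx, by omega⟩⟩
      omega
    obtain ⟨T, hTX, hxT, hTc, hTq⟩ := exists_clique G r (m + 1) X hX x hx hxlow h2
    have hdrop : ∀ v ∈ X \ T, dX G X v ≤ dX G (X \ T) v + (r + 1) := by
      intro v hv
      rw [mem_sdiff] at hv
      have hsub : X.filter (fun w => G.Adj v w) ⊆
          (X \ T).filter (fun w => G.Adj v w) ∪ T.filter (fun w => G.Adj v w) := by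
        intro w hw
        simp only [mem_union, mem_filter, mem_sdiff] at hw ⊢
        tauto
      have hlt : (T.filter (fun w => G.Adj v w)).card < r + 2 := by
        rw [← hTc]
        apply card_lt_card
        refine (ssubset_iff_of_subset (filter_subset _ _)).2 ?_
        by_contra hcon
        push Not at hcon
        refine h3 x hx hxd (insert v T) (insert_subset hv.1 hTX) ⟨?_, ?_⟩ (mem_insert_of_mem hxT)
        · rw [coe_insert, SimpleGraph.isClique_insert]
          exact ⟨hTq, fun w hw _ => (mem_filter.1 (hcon w hw)).2⟩
        · rw [card_insert_of_notMem hv.2, hTc]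
      have := (card_le_card hsub).trans (card_union_le _ _)
      unfold dX
      omega
    have hXT : (X \ T).card = (r + 2) * m := by
      rw [card_sdiff_of_subset hTX, hX, hTc, mul_add]; simp
    -- counting vertices of small degree
    have hcount : ∀ a b, b ≤ a + (r + 1) → ∀ j, (X.filter (fun v => dX G X v < b)).card ≤ j + 1 →
        True → ∀ a', a' + (r + 1) ≤ b →
        ((X \ T).filter (fun v => dX G (X \ T) v < a')).card ≤ j := by
      intro a b _ j hj _ a' ha'
      by_contra hcon
      push Not at hcon
      have hne : ((X \ T).filter (fun v => dX G (X \ T) v < a')).Nonempty :=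
        card_pos.1 (by omega)
      have hmem : ∀ v ∈ (X \ T).filter (fun v => dX G (X \ T) v < a'),
          v ∈ (X.filter (fun v => dX G X v < b)).erase x := by
        intro v hv
        rw [mem_filter] at hv
        have h5 := hdrop v hv.1
        rw [mem_sdiff] at hv
        rw [mem_erase, mem_filter]
        refine ⟨?_, hv.1.1, by omega⟩
        rintro rfl
        exact hv.1.2 hxT
      have hxmem : x ∈ X.filter (fun v => dX G X v < b) := by
        obtain ⟨v, hv⟩ := hne
        have := mem_filter.1 (mem_of_mem_erase (hmem v hv))
        exact mem_filter.2 ⟨hx, lt_of_le_of_lt (hmin v this.1) this.2⟩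
      have h6 := card_le_card hmem
      rw [card_erase_of_mem hxmem] at h6
      omega
    obtain ⟨P, p1, p2, p3⟩ := ih (X \ T) hXT (by
        intro i hi him
        have h4 := h1 (i + 1) (by omega) (by omega)
        have h5 := hcount (r * (m + 1) + (i + 1)) (r * (m + 1) + (i + 1)) (by omega) (i - 1)
          (by omega) trivial (r * m + i) (by rw [mul_add]; omega)
        omega)
      (hcount _ _ (Nat.le_add_right _ _) m h2 trivial _ (by rw [mul_add, mul_one]))
      (by
        intro v hv hvd t ht htq
        have h5 := hdrop v hv
        refine h3 v (mem_sdiff.1 hv).1 ?_ t (ht.trans sdiff_subset) htq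
        rw [mul_add, mul_one]
        omega)
    refine ⟨insert T P, ?_, ?_, ?_⟩
    · intro p hp
      rcases mem_insert.1 hp with rfl | hp
      · exact ⟨hTc, hTq⟩
      · exact p1 p hp
    · rw [coe_insert]
      refine p2.insert ?_
      intro q hq _
      have : q ⊆ X \ T := by
        rw [← p3]; exact subset_biUnion_of_mem id hq
      exact disjoint_sdiff.mono_right this
    · rw [biUnion_insert, p3]
      exact union_sdiff_of_subset hTX

end HS

/-- Let `r ≥ 2` divide `n`, and let `G` be a graph on `n` vertices whose nondecreasing degree
sequence `d` (realised via a permutation `σ` of the vertices, 1-based: `d_i = d ⟨i-1⟩`)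
satisfies `d_i ≥ (r-2)n/r + i` for all `i < n/r` and `d_{n/r+1} ≥ (r-1)n/r`. If moreover no
vertex of degree less than `(r-1)n/r` lies in a copy of `K_{r+1}`, then `G` contains a
perfect `K_r`-packing. -/
theorem stmt4 (n r : ℕ) (hr : 2 ≤ r) (hdvd : r ∣ n)
    (G : SimpleGraph (Fin n))
    (d : Fin n → ℕ) (σ : Equiv.Perm (Fin n))
    (hmono : Monotone d) (hdeg : ∀ i, d i = deg G (σ i))
    (hcond1 : ∀ i : Fin n, (i : ℕ) + 1 < n / r → (r - 2) * (n / r) + ((i : ℕ) + 1) ≤ d i)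
    (hcond2 : ∀ i : Fin n, (i : ℕ) + 1 = n / r + 1 → (r - 1) * (n / r) ≤ d i)
    (hfree : ∀ x : Fin n, deg G x < (r - 1) * (n / r) →
      ∀ t : Finset (Fin n), G.IsNClique (r + 1) t → x ∉ t) :
    HasPerfectKrPacking G r := by
  classical
  obtain ⟨q, rfl⟩ : ∃ q, r = q + 2 := ⟨r - 2, by omega⟩
  have hq1 : q + 2 - 1 = q + 1 := by omega
  have hq2 : q + 2 - 2 = q := by omega
  rw [hq1] at hcond2 hfree
  rw [hq2] at hcond1
  obtain ⟨m, hm⟩ := hdvd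
  have hnm : n / (q + 2) = m := by rw [hm]; exact Nat.mul_div_cancel_left _ (by omega)
  rw [hnm] at hcond1 hcond2 hfree
  have hdX : ∀ v, HS.dX G Finset.univ v = deg G v := by
    intro v
    unfold HS.dX deg
    rw [Nat.card_eq_fintype_card, ← Set.toFinset_card]
    congr 1
    ext w
    simp
  have hcnt : ∀ (c : Fin n) (D : ℕ), D ≤ d c →
      (Finset.univ.filter (fun v => HS.dX G Finset.univ v < D)).card ≤ c := by
    intro c D hD
    have h1 : Finset.univ.filter (fun v => HS.dX G Finset.univ v < D) ⊆
        (Finset.Iio c).image σ := by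
      intro v hv
      simp only [Finset.mem_filter, Finset.mem_univ, true_and, hdX] at hv
      simp only [Finset.mem_image, Finset.mem_Iio]
      refine ⟨σ.symm v, ?_, by simp⟩
      by_contra hcon
      have := hmono (not_lt.1 hcon)
      rw [hdeg (σ.symm v)] at this
      simp at this
      omega
    exact (Finset.card_le_card h1).trans (Finset.card_image_le.trans (by simp))
  rcases Nat.eq_zero_or_pos m with h0 | hmpos
  · subst h0
    have : n = 0 := by simpa using hm
    subst this
    exact ⟨∅, by simp, by simp, by ext v; exact v.elim0⟩
  have hmn : m < n := by nlinarith
  obtain ⟨P, p1, p2, p3⟩ := HS.main G q m Finset.univ (by simp [← hm]) (by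
      intro i hi him
      have := hcnt ⟨i - 1, by omega⟩ (q * m + i) (by
        have := hcond1 ⟨i - 1, by omega⟩ (by simp; omega)
        simp only at this
        omega)
      simp only at this
      convert (show _ < i from lt_of_le_of_lt this (by omega)))
    (by
      have := hcnt ⟨m, hmn⟩ ((q + 1) * m) (hcond2 ⟨m, hmn⟩ rfl)
      convert this)
    (by
      intro x _ hx t _ ht
      rw [hdX] at hx
      exact hfree x hx t ht)
  refine ⟨P, p1, p2, ?_⟩
  convert p3
end

section
/- For every C ∈ ℕ there exists n_0 ∈ ℕ such that for every n ≥ n_0 divisible by 3 there exists a graph G on n vertices whose degree sequence d_1 ≤ ⋯ ≤ d_n satisfies d_i ≥ n/3 + C + i for all 1 ≤ i ≤ n/3, but G does not contain the square of a Hamilton cycle. -/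
/-- `G` contains the square of a Hamilton cycle: there is a cyclic ordering of all vertices
in which every vertex is adjacent to the next vertex and to the vertex after next. -/
def ContainsSquareHamCycle {n : ℕ} (G : SimpleGraph (Fin n)) : Prop :=
  ∃ f : ZMod n → Fin n, Function.Bijective f ∧
    ∀ j : ZMod n, G.Adj (f j) (f (j + 1)) ∧ G.Adj (f j) (f (j + 2))


/-- Oriented adjacency on `ℕ` (smaller vertex first): `0` is the special vertex, `[1,p)` are leaves,
`[p,p+m)` are star centres, and everything from `p+m` on is adjacent to all but `0`. -/
def relR (p m a b : ℕ) : Prop :=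
  a < b ∧ ((a = 0 ∧ b < p + m) ∨ (0 < a ∧ p + m ≤ b) ∨
    (0 < a ∧ a < p ∧ p ≤ b ∧ b < p + m ∧ a % m = b % m))

def starGraph (p m n : ℕ) : SimpleGraph (Fin n) where
  Adj x y := relR p m x y ∨ relR p m y x
  symm := ⟨fun _ _ h => h.symm⟩
  loopless := ⟨fun x h => by
    rcases h with h | h <;> exact absurd h.1 (lt_irrefl _)⟩

lemma card_le_deg (p m n : ℕ) (v : Fin n) (S : Finset ℕ)
    (h : ∀ x ∈ S, x < n ∧ (relR p m v x ∨ relR p m x v)) :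
    S.card ≤ deg (starGraph p m n) v := by
  unfold deg
  have : S.card = Nat.card S := by simp
  rw [this]
  refine Nat.card_le_card_of_injective
    (fun x : S => (⟨⟨x.1, (h x.1 x.2).1⟩, (h x.1 x.2).2⟩ : (starGraph p m n).neighborSet v)) ?_
  intro x y hxy
  exact Subtype.ext (congrArg (fun z : (starGraph p m n).neighborSet v => (z.1 : ℕ)) hxy)

lemma window_unique {p m a b : ℕ} (ha : p ≤ a) (ha' : a < p + m) (hb : p ≤ b) (hb' : b < p + m)
    (h : a % m = b % m) : a = b := by
  have h1 := Nat.div_add_mod a m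
  have h2 := Nat.div_add_mod b m
  rcases lt_trichotomy (a / m) (b / m) with h3 | h3 | h3
  · have : m * (a / m + 1) ≤ m * (b / m) := Nat.mul_le_mul_left _ h3
    rw [Nat.mul_add] at this
    omega
  · rw [h3] at h1; omega
  · have : m * (b / m + 1) ≤ m * (a / m) := Nat.mul_le_mul_left _ h3
    rw [Nat.mul_add] at this
    omega

lemma sorted_ge {n : ℕ} (f g : Fin n → ℕ) (hg : Monotone g) (hfg : ∀ i, g i ≤ f i)
    (σ : Equiv.Perm (Fin n)) (hσ : Monotone (f ∘ σ)) (i : Fin n) : g i ≤ f (σ i) := by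
  have : ∃ j ≤ i, i ≤ σ j := by
    by_contra! hc
    have h1 : (Finset.Iic i).card ≤ (Finset.Iio i).card := by
      refine Finset.card_le_card_of_injOn σ ?_ σ.injective.injOn
      intro j hj
      simp only [Finset.coe_Iic, Set.mem_Iic] at hj
      simpa using hc j hj
    simp at h1
  obtain ⟨j, hj, hij⟩ := this
  exact (hg hij).trans ((hfg _).trans (hσ hj))

lemma no_square (p m n : ℕ) (hn : 3 < n) : ¬ ContainsSquareHamCycle (starGraph p m n) := by
  rintro ⟨f, hf, h⟩
  obtain ⟨j, hj⟩ := hf.2 ⟨0, by omega⟩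
  have h3 : (3 : ZMod n) ≠ 0 := by
    intro h0
    have : ((3 : ℕ) : ZMod n) = 0 := by exact_mod_cast h0
    rw [ZMod.natCast_eq_zero_iff] at this
    have := Nat.le_of_dvd (by norm_num) this
    omega
  have hac : f (j - 2) ≠ f (j + 1) := by
    intro e
    apply h3
    have := hf.1 e
    linear_combination -this
  have hbd : f (j - 1) ≠ f (j + 2) := by
    intro e
    apply h3
    have := hf.1 e
    linear_combination -this
  have e1 := h (j - 2)
  have e2 := h (j - 1)
  have e3 := h j
  have e4 := h (j + 1)
  rw [show j - 2 + 1 = j - 1 by ring, show j - 2 + 2 = j by ring] at e1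
  rw [show j - 1 + 1 = j by ring, show j - 1 + 2 = j + 1 by ring] at e2
  rw [show j + 1 + 1 = j + 2 by ring] at e4
  have hab := e1.1
  have hav := e1.2
  have hbv := e2.1
  have hbc := e2.2
  have hvc := e3.1
  have hvd := e3.2
  have hcd := e4.1
  rw [hj] at hav hbv hvc hvd
  generalize f (j - 2) = a at *
  generalize f (j - 1) = b at *
  generalize f (j + 1) = c at *
  generalize f (j + 2) = d at *
  have hac' : (a : ℕ) ≠ c := fun e => hac (Fin.ext e)
  have hbd' : (b : ℕ) ≠ d := fun e => hbd (Fin.ext e)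
  simp only [starGraph, relR] at hab hav hbv hbc hvc hvd hcd
  have ha : 0 < (a : ℕ) ∧ (a : ℕ) < p + m := by omega
  have hb : 0 < (b : ℕ) ∧ (b : ℕ) < p + m := by omega
  have hc : 0 < (c : ℕ) ∧ (c : ℕ) < p + m := by omega
  have hd : 0 < (d : ℕ) ∧ (d : ℕ) < p + m := by omega
  clear hav hbv hvc hvd
  generalize (a : ℕ) = a at *
  generalize (b : ℕ) = b at *
  generalize (c : ℕ) = c at *
  generalize (d : ℕ) = d at *
  by_cases hbp : b < p
  · have h1 : p ≤ a ∧ a % m = b % m := by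
      rcases hab with ⟨_, h | h | h⟩ | ⟨_, h | h | h⟩ <;> omega
    have h2 : p ≤ c ∧ b % m = c % m := by
      rcases hbc with ⟨_, h | h | h⟩ | ⟨_, h | h | h⟩ <;> omega
    exact hac' (window_unique h1.1 ha.2 h2.1 hc.2 (h1.2.trans h2.2))
  · have h1 : c < p ∧ c % m = b % m := by
      rcases hbc with ⟨_, h | h | h⟩ | ⟨_, h | h | h⟩ <;> omega
    have h2 : p ≤ d ∧ c % m = d % m := by
      rcases hcd with ⟨_, h | h | h⟩ | ⟨_, h | h | h⟩ <;> omega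
    exact hbd' (window_unique (by omega) hb.2 h2.1 hd.2 (h1.2.symm.trans h2.2))

lemma deg_bound (C p : ℕ) (hp : (3 * C + 2) * (2 * C + 1) < p) (v : Fin (3 * (p + 2 * C))) :
    min (p + 2 * C + C + 1 + (v : ℕ)) (2 * (p + 2 * C) + C) ≤
      deg (starGraph p (3 * C + 2) (3 * (p + 2 * C))) v := by
  have hpC : 3 * C + 2 < p := by nlinarith
  have hv := v.2
  rcases Nat.eq_zero_or_pos (v : ℕ) with h0 | h0
  · refine le_trans ?_ (card_le_deg _ _ _ v (Finset.Ico 1 (p + (3 * C + 2))) ?_)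
    · rw [Nat.card_Ico]; omega
    · intro x hx
      rw [Finset.mem_Ico] at hx
      refine ⟨by omega, Or.inl ⟨by omega, Or.inl ⟨h0, hx.2⟩⟩⟩
  rcases lt_or_ge (v : ℕ) p with h1 | h1
  · -- leaf
    obtain ⟨c, hc1, hc2, hc3⟩ : ∃ c, p ≤ c ∧ c < p + (3 * C + 2) ∧
        (v : ℕ) % (3 * C + 2) = c % (3 * C + 2) := by
      have hlt := Nat.mod_lt (p + (3 * C + 1) - v) (show 0 < 3 * C + 2 by omega)
      have hdm := Nat.div_add_mod (p + (3 * C + 1) - v) (3 * C + 2)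
      refine ⟨p + (3 * C + 1) - (p + (3 * C + 1) - v) % (3 * C + 2), by omega, by omega, ?_⟩
      have : p + (3 * C + 1) - (p + (3 * C + 1) - v) % (3 * C + 2)
        = v + (3 * C + 2) * ((p + (3 * C + 1) - v) / (3 * C + 2)) := by omega
      rw [this, Nat.add_mul_mod_self_left]
    refine le_trans ?_ (card_le_deg _ _ _ v
      (insert 0 (insert c (Finset.Ico (p + (3 * C + 2)) (3 * (p + 2 * C))))) ?_)
    · rw [Finset.card_insert_of_notMem, Finset.card_insert_of_notMem, Nat.card_Ico]
      · omega
      · simp; omega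
      · simp; omega
    · intro x hx
      simp only [Finset.mem_insert, Finset.mem_Ico] at hx
      rcases hx with rfl | rfl | hx
      · exact ⟨by omega, Or.inr ⟨h0, Or.inl ⟨rfl, by omega⟩⟩⟩
      · exact ⟨by omega, Or.inl ⟨by omega, Or.inr (Or.inr ⟨h0, h1, hc1, hc2, hc3⟩)⟩⟩
      · exact ⟨by omega, Or.inl ⟨by omega, Or.inr (Or.inl ⟨h0, hx.1⟩)⟩⟩
  rcases lt_or_ge (v : ℕ) (p + (3 * C + 2)) with h2 | h2
  · -- centre
    have key : ∀ t < 2 * C + 1, (3 * C + 2) * (t + 1) < p ∧ 3 * C + 2 ≤ (3 * C + 2) * (t + 1) := by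
      intro t ht
      have : (3 * C + 2) * (t + 1) ≤ (3 * C + 2) * (2 * C + 1) := Nat.mul_le_mul_left _ (by omega)
      exact ⟨by omega, Nat.le_mul_of_pos_right _ (by omega)⟩
    refine le_trans ?_ (card_le_deg _ _ _ v
      ((insert 0 (Finset.Ico (p + (3 * C + 2)) (3 * (p + 2 * C)))) ∪
        (Finset.range (2 * C + 1)).image (fun t => (v : ℕ) - (3 * C + 2) * (t + 1))) ?_)
    · rw [Finset.card_union_of_disjoint, Finset.card_insert_of_notMem, Nat.card_Ico,
        Finset.card_image_of_injOn, Finset.card_range]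
      · omega
      · intro s hs t ht hst
        simp only [Finset.coe_range, Set.mem_Iio] at hs ht
        have k1 := key s hs
        have k2 := key t ht
        simp only at hst
        have : (3 * C + 2) * (s + 1) = (3 * C + 2) * (t + 1) := by omega
        have := Nat.eq_of_mul_eq_mul_left (by omega) this
        omega
      · simp
      · rw [Finset.disjoint_left]
        intro x hx hx'
        simp only [Finset.mem_insert, Finset.mem_Ico, Finset.mem_image, Finset.mem_range] at hx hx'
        obtain ⟨t, ht, rfl⟩ := hx'
        have := key t ht
        omega
    · intro x hx
      simp only [Finset.mem_union, Finset.mem_insert, Finset.mem_Ico, Finset.mem_image,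
        Finset.mem_range] at hx
      rcases hx with (rfl | hx) | ⟨t, ht, rfl⟩
      · exact ⟨by omega, Or.inr ⟨h0, Or.inl ⟨rfl, by omega⟩⟩⟩
      · exact ⟨by omega, Or.inl ⟨by omega, Or.inr (Or.inl ⟨h0, hx.1⟩)⟩⟩
      · have k := key t ht
        refine ⟨by omega, Or.inr ⟨by omega, Or.inr (Or.inr ⟨by omega, by omega, h1, h2, ?_⟩)⟩⟩
        exact Nat.sub_mul_mod (by omega)
  · refine le_trans ?_ (card_le_deg _ _ _ v ((Finset.Ico 1 (3 * (p + 2 * C))).erase v) ?_)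
    · rw [Finset.card_erase_of_mem (by simp; omega), Nat.card_Ico]; omega
    · intro x hx
      simp only [Finset.mem_erase, Finset.mem_Ico] at hx
      refine ⟨by omega, ?_⟩
      rcases lt_or_gt_of_ne hx.1 with h | h
      · exact Or.inr ⟨h, Or.inr (Or.inl ⟨by omega, h2⟩)⟩
      · exact Or.inl ⟨h, Or.inr (Or.inl ⟨by omega, by omega⟩)⟩

/-- For every `C ∈ ℕ` there is `n₀` such that for every `n ≥ n₀` divisible by `3` there is a
graph `G` on `n` vertices whose nondecreasing degree sequence `d` (realised via a permutation
`σ` of the vertices, 1-based: `d_i = d ⟨i-1⟩`) satisfies `d_i ≥ n/3 + C + i` for all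
`1 ≤ i ≤ n/3`, but `G` does not contain the square of a Hamilton cycle. -/
theorem stmt13 (C : ℕ) :
    ∃ n₀ : ℕ, ∀ n : ℕ, n₀ ≤ n → 3 ∣ n →
      ∃ (G : SimpleGraph (Fin n)) (d : Fin n → ℕ) (σ : Equiv.Perm (Fin n)),
        Monotone d ∧ (∀ i, d i = deg G (σ i)) ∧
        (∀ i : Fin n, (i : ℕ) + 1 ≤ n / 3 → n / 3 + C + ((i : ℕ) + 1) ≤ d i) ∧
        ¬ ContainsSquareHamCycle G := by
  refine ⟨3 * ((3 * C + 2) * (2 * C + 1) + 1 + 2 * C), ?_⟩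
  rintro n hn ⟨k, rfl⟩
  obtain ⟨p, rfl⟩ : ∃ p, k = p + 2 * C := ⟨k - 2 * C, by omega⟩
  have hp : (3 * C + 2) * (2 * C + 1) < p := by omega
  have hpC : 3 * C + 2 < p := by nlinarith
  set G := starGraph p (3 * C + 2) (3 * (p + 2 * C)) with hG
  have hmono : Monotone (deg G ∘ Tuple.sort (deg G)) := Tuple.monotone_sort (deg G)
  refine ⟨G, deg G ∘ Tuple.sort (deg G), Tuple.sort (deg G), hmono, fun _ => rfl, ?_,
    no_square _ _ _ (by omega)⟩
  intro i hi
  have := sorted_ge (deg G)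
    (fun v => min (p + 2 * C + C + 1 + (v : ℕ)) (2 * (p + 2 * C) + C))
    (fun a b hab => by
      have : (a : ℕ) ≤ b := hab
      simp only
      omega) (deg_bound C p hp) _ hmono i
  simp only [Function.comp] at this ⊢
  omega
end
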